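/- For every nonnegative integer n, N(0,5,5n+4) = N(1,5,5n+4) = N(2,5,5n+4) = N(3,5,5n+4) = N(4,5,5n+4) = p(5n+4)/5; that is, the residue of the rank modulo 5 divides the partitions of 5n+4 into five equally numerous classes (Dyson's rank conjecture modulo 5). -/

import Mathlib

/-!
Dyson's adjoint map is a bijection between the partitions of `n` of rank at most `r + 1` and the
partitions of `n + r` of rank at least `r - 1` (`card_rank_le_eq`). It yields recurrences for the
numbers of partitions whose rank is bounded on one side, hence the symmetry of the rank
(`rankLe_neg`), the generating function of the partitions of rank at least `m` (`genA_eq`), Euler's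
pentagonal number theorem (`genP_mul_sig`), and, by summation over `m + 5 j`, bilateral series for
the ranks modulo `5` (`genV_eq`, `bil_eq`). All these power series are summed for `‖q‖ < 1/2`, where
crude bounds for the coefficients suffice.

Together with the symmetry, equidistribution modulo `5` amounts to two linear relations
(`equidistribution_of`). With `genP` the generating function of `p(n)` and `bil` the bilateral sums,
they say that `genP * (1 + 5 * bil 1)` and `genP * (2 + 5 * bil 0)` have no exponents congruent to
`4` modulo `5`. Put `y = q ^ 5`.

* The quintuple product identity (`quintuple`) gives the `5`-dissection of the pentagonal series,
  `1 / genP q = eps (y ^ 5) * (qa y - q - q ^ 2 / qa y)`, where `qa` is a quotient of theta functions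
  (`T_eq_eps`).
* The bilateral sums split into Appell–Lerch sums of level three with nome `y ^ 5`
  (`bil_dissect`). By an addition formula (`appell_add`, and its limiting case `appell_add_one`)
  these combine to a multiple of `qa y - q - q ^ 2 / qa y` plus theta quotients and logarithmic
  derivatives of theta functions (`bil_zero`, `bil_one`).
* The logarithmic derivatives are theta quotients as well (`theta_cube`), and the remaining part
  becomes a rational function of `q`, `qa y` and one further theta quotient. It is divisible by
  `qa y - q - q ^ 2 / qa y` too, and the cofactor has degree at most `3` in `q`
  (`one_dissect`, `zero_dissect`).

The identities between theta functions and Appell–Lerch sums all come from Liouville's theorem on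
the torus `ℂˣ / p ^ ℤ` (`liouville`): each time a function that is invariant under `z ↦ p z` turns
out to have only removable singularities, hence is constant.
Finally, a filter over the fifth roots of unity isolates the coefficients of `q ^ (5 n + 4)`
(`coeff_eq_zero`).
-/

/-- The Dyson rank of a partition: largest part minus number of parts. -/
noncomputable def partitionRank {n : ℕ} (p : n.Partition) : ℤ :=
  (p.parts.sup : ℤ) - p.parts.card

/-- `NRank m t n` is `N(m,t,n)`, the number of partitions of `n` whose rank is
congruent to `m` modulo `t`. -/
noncomputable def NRank (m t : ℤ) (n : ℕ) : ℕ :=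
  Nat.card {p : n.Partition // partitionRank p % t = m}

/-- `partitionCount n` is `p(n)`, the number of partitions of `n`. -/
noncomputable def partitionCount (n : ℕ) : ℕ := Nat.card (Nat.Partition n)

namespace DysonMod5

open Filter Topology

/-! ### Dyson's bijection -/

/-- Dyson's adjoint map on multisets of parts: subtract `1` from each part, adjoin the new part
`s.card + r`, and drop zeros. -/
def dysonMap (r : ℤ) (s : Multiset ℕ) : Multiset ℕ :=
  ((s.card + r).toNat ::ₘ s.map (· - 1)).filter (0 < ·)

/-- The inverse of `dysonMap r`: remove a largest part, add `1` to each of the other parts, and fill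
up with parts `1` to a total of `t.sup - r` parts. -/
def dysonInv (r : ℤ) (t : Multiset ℕ) : Multiset ℕ :=
  (t.erase t.sup).map (· + 1) +
    Multiset.replicate ((t.sup - r).toNat - (t.erase t.sup).card) 1

theorem sup_mem_of_ne_zero {t : Multiset ℕ} (ht : t ≠ 0) : t.sup ∈ t := by
  induction t using Multiset.induction with
  | empty => exact absurd rfl ht
  | cons a t ih =>
    rcases eq_or_ne t 0 with rfl | h
    · simp
    · rw [Multiset.sup_cons]
      rcases le_total a t.sup with h1 | h1
      · rw [sup_eq_right.2 h1]; exact Multiset.mem_cons_of_mem (ih h)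
      · rw [sup_eq_left.2 h1]; exact Multiset.mem_cons_self _ _

theorem sum_pred_add_card (s : Multiset ℕ) (hs : ∀ i ∈ s, 0 < i) :
    (s.map (· - 1)).sum + s.card = s.sum := by
  induction s using Multiset.induction with
  | empty => simp
  | cons a t ih =>
    have := ih (fun i hi => hs i (Multiset.mem_cons_of_mem hi))
    have := hs a (Multiset.mem_cons_self _ _)
    simp
    omega

theorem sum_filter_pos (s : Multiset ℕ) : (s.filter (0 < ·)).sum = s.sum := by
  induction s using Multiset.induction with
  | empty => simp
  | cons a t ih =>
    by_cases h : 0 < a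
    · simp [h, ih]
    · simp [h, ih]; omega

theorem map_succ_filter_pred (s : Multiset ℕ) (hs : ∀ i ∈ s, 0 < i) :
    ((s.map (· - 1)).filter (0 < ·)).map (· + 1) +
      Multiset.replicate (s.card - ((s.map (· - 1)).filter (0 < ·)).card) 1 = s := by
  induction s using Multiset.induction with
  | empty => simp
  | cons a t ih =>
    have h1 := ih (fun i hi => hs i (Multiset.mem_cons_of_mem hi))
    have h2 := hs a (Multiset.mem_cons_self _ _)
    have h3 : ((t.map (· - 1)).filter (0 < ·)).card ≤ t.card := by
      simpa using Multiset.card_le_card (Multiset.filter_le (0 < ·) (t.map (· - 1)))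
    rw [Multiset.map_cons]
    by_cases h : 0 < a - 1
    · rw [Multiset.filter_cons_of_pos _ h, Multiset.map_cons, Multiset.card_cons,
        Multiset.card_cons, Nat.add_sub_add_right, Multiset.cons_add, h1]
      congr 1; omega
    · obtain rfl : a = 1 := by omega
      rw [Multiset.filter_cons_of_neg _ h, Multiset.card_cons, Nat.sub_add_comm h3,
        Multiset.replicate_succ, Multiset.add_cons, h1]

theorem filter_pred_succ (u : Multiset ℕ) (k : ℕ) (hu : ∀ i ∈ u, 0 < i) :
    ((u.map (· + 1) + Multiset.replicate k 1).map (· - 1)).filter (0 < ·) = u := by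
  rw [Multiset.map_add, Multiset.map_map, Multiset.filter_add, Multiset.map_replicate]
  have h1 : Multiset.filter (fun x => 0 < x) (Multiset.replicate k (1 - 1)) = 0 := by
    rw [Multiset.filter_eq_nil]
    intro a ha
    rw [Multiset.eq_of_mem_replicate ha]; simp
  rw [h1]
  simpa [Function.comp_def, Multiset.filter_eq_self] using hu

theorem dysonMap_spec {n N : ℕ} {r : ℤ} (hN : (N : ℤ) = n + r) (s : Multiset ℕ)
    (hs : ∀ i ∈ s, 0 < i) (hsum : s.sum = n) (hr : (s.sup : ℤ) - s.card ≤ r + 1) :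
    (0 ≤ s.card + r) ∧ ((dysonMap r s).sup : ℤ) = s.card + r ∧
      (dysonMap r s).erase (dysonMap r s).sup = (s.map (· - 1)).filter (0 < ·) := by
  have hc : 0 ≤ s.card + r := by
    rcases eq_or_ne s 0 with rfl | h
    · simp at hsum ⊢; omega
    · have := hs _ (sup_mem_of_ne_zero h); omega
  obtain ⟨c, hc'⟩ := Int.eq_ofNat_of_zero_le hc
  have hle : ∀ i ∈ (s.map (· - 1)), i ≤ c := by
    intro i hi
    obtain ⟨j, hj, rfl⟩ := Multiset.mem_map.1 hi
    have := Multiset.le_sup hj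
    omega
  have hsup : ((s.map (· - 1)).filter (0 < ·)).sup ≤ c :=
    Multiset.sup_le.2 fun i hi => hle i (Multiset.mem_of_mem_filter hi)
  have hd : dysonMap r s = (c ::ₘ s.map (· - 1)).filter (0 < ·) := by
    rw [dysonMap, hc']; rfl
  refine ⟨hc, ?_⟩
  rw [hc', hd]
  rcases Nat.eq_zero_or_pos c with rfl | h0
  · have : (s.map (· - 1)).filter (0 < ·) = 0 := by
      rw [Multiset.filter_eq_nil]
      intro a ha; have := hle a ha; omega
    rw [Multiset.filter_cons_of_neg _ (by simp), this]
    simp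
  · rw [Multiset.filter_cons_of_pos (p := fun x => 0 < x) _ h0, Multiset.sup_cons, sup_eq_left.2 hsup]
    simp

theorem dysonInv_spec {n N : ℕ} {r : ℤ} (hN : (N : ℤ) = n + r) (t : Multiset ℕ)
    (hsum : t.sum = N) (hr : r - 1 ≤ (t.sup : ℤ) - t.card) :
    ((t.erase t.sup).card : ℤ) ≤ t.sup - r ∧ (t.sup + (t.erase t.sup).sum = N) := by
  rcases eq_or_ne t 0 with rfl | h
  · simp at hsum ⊢; omega
  · have h1 := sup_mem_of_ne_zero h
    have h2 := Multiset.card_erase_add_one h1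
    have h3 := Multiset.sum_erase h1
    constructor
    · omega
    · rw [h3, hsum]

/-- Dyson's bijection: the partitions of `n` of rank at most `r + 1` are equinumerous with the
partitions of `n + r` of rank at least `r - 1`. -/
theorem card_rank_le_eq {n N : ℕ} {r : ℤ} (hN : (N : ℤ) = n + r) :
    Nat.card {p : n.Partition // partitionRank p ≤ r + 1} =
      Nat.card {p : N.Partition // r - 1 ≤ partitionRank p} := by
  refine Nat.card_congr
    { toFun := fun p => ⟨⟨dysonMap r p.1.parts, ?_, ?_⟩, ?_⟩
      invFun := fun p => ⟨⟨dysonInv r p.1.parts, ?_, ?_⟩, ?_⟩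
      left_inv := ?_
      right_inv := ?_ }
  · intro i hi; exact (Multiset.mem_filter.1 hi).2
  · obtain ⟨h1, h2, h3⟩ := dysonMap_spec hN p.1.parts (fun i hi => p.1.parts_pos hi)
      p.1.parts_sum p.2
    rw [dysonMap, sum_filter_pos, Multiset.sum_cons]
    have := sum_pred_add_card p.1.parts (fun i hi => p.1.parts_pos hi)
    rw [p.1.parts_sum] at this
    omega
  · obtain ⟨h1, h2, h3⟩ := dysonMap_spec hN p.1.parts (fun i hi => p.1.parts_pos hi)
      p.1.parts_sum p.2
    have h4 : (dysonMap r p.1.parts).card ≤ p.1.parts.card + 1 := by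
      refine (Multiset.card_le_card (Multiset.filter_le _ _)).trans ?_
      simp
    simp only [partitionRank]
    omega
  · intro i hi
    rcases Multiset.mem_add.1 hi with h | h
    · obtain ⟨j, -, rfl⟩ := Multiset.mem_map.1 h; simp
    · rw [Multiset.eq_of_mem_replicate h]; simp
  · obtain ⟨h1, h2⟩ := dysonInv_spec hN p.1.parts p.1.parts_sum p.2
    rw [dysonInv, Multiset.sum_add, Multiset.sum_map_add, Multiset.sum_replicate]
    simp
    omega
  · obtain ⟨h1, h2⟩ := dysonInv_spec hN p.1.parts p.1.parts_sum p.2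
    simp only [partitionRank]
    have h3 : (dysonInv r p.1.parts).sup ≤ p.1.parts.sup + 1 := by
      refine Multiset.sup_le.2 fun i hi => ?_
      rcases Multiset.mem_add.1 hi with h | h
      · obtain ⟨j, hj, rfl⟩ := Multiset.mem_map.1 h
        have := Multiset.le_sup (Multiset.mem_of_mem_erase hj)
        omega
      · rw [Multiset.eq_of_mem_replicate h]; simp
    have h4 : (dysonInv r p.1.parts).card = (p.1.parts.sup - r).toNat := by
      simp [dysonInv]; omega
    omega
  · intro p
    obtain ⟨h1, h2, h3⟩ := dysonMap_spec hN p.1.parts (fun i hi => p.1.parts_pos hi)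
      p.1.parts_sum p.2
    apply Subtype.ext
    apply Nat.Partition.ext
    simp only
    rw [dysonInv, h3, h2]
    have := map_succ_filter_pred p.1.parts (fun i hi => p.1.parts_pos hi)
    simpa using this
  · intro p
    obtain ⟨h1, h2⟩ := dysonInv_spec hN p.1.parts p.1.parts_sum p.2
    apply Subtype.ext
    apply Nat.Partition.ext
    simp only
    have h4 : (dysonInv r p.1.parts).card = (p.1.parts.sup - r).toNat := by
      simp [dysonInv]; omega
    have h5 : ((dysonInv r p.1.parts).card + r).toNat = p.1.parts.sup := by
      rw [h4]; omega
    rw [dysonMap, h5]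
    have h6 : ((dysonInv r p.1.parts).map (· - 1)).filter (0 < ·) =
        p.1.parts.erase p.1.parts.sup :=
      filter_pred_succ _ _ fun i hi => p.1.parts_pos (Multiset.mem_of_mem_erase hi)
    rcases eq_or_ne p.1.parts 0 with h | h
    · rw [Multiset.filter_cons_of_neg _ (by simp [h]), h6, h]; simp
    · have h7 := sup_mem_of_ne_zero h
      rw [Multiset.filter_cons_of_pos _ (p.1.parts_pos h7), h6, Multiset.cons_erase h7]

/-! ### Ranks modulo five -/

/-- The number of partitions of `n` of rank at least `m`. -/
noncomputable def rankGe (m : ℤ) (n : ℕ) : ℕ := Nat.card {p : n.Partition // m ≤ partitionRank p}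

/-- The number of partitions of `n` of rank at most `m`. -/
noncomputable def rankLe (m : ℤ) (n : ℕ) : ℕ := Nat.card {p : n.Partition // partitionRank p ≤ m}

theorem card_subtype_add_compl {α : Type*} [Finite α] (P Q : α → Prop) (h : ∀ a, Q a ↔ ¬ P a) :
    Nat.card {a // P a} + Nat.card {a // Q a} = Nat.card α := by
  classical
  have := Fintype.ofFinite α
  have hQ : Q = fun a => ¬ P a := funext fun a => propext (h a)
  subst hQ
  simp only [Nat.card_eq_fintype_card]
  rw [Fintype.card_subtype_compl]
  have := Fintype.card_subtype_le P
  omega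

/-- Dyson's bijection, with the partitions of `n` of rank at most `m + 2` counted as the complement of
those of rank at least `m + 3`. -/
theorem rankGe_rec (m n : ℕ) :
    rankGe m (n + m + 1) + rankGe (m + 3) n = partitionCount n := by
  have h := card_rank_le_eq (n := n) (N := n + m + 1) (r := m + 1) (by push_cast; ring)
  rw [show (m : ℤ) + 1 - 1 = m by ring] at h
  rw [rankGe, ← h]
  exact card_subtype_add_compl _ _ (fun a => by omega)

theorem rankLe_rec (m n : ℕ) :
    rankLe (-m) (n + m + 1) + rankLe (-(m + 3)) n = partitionCount n := by
  have h := card_rank_le_eq (n := n + m + 1) (N := n) (r := -m - 1) (by push_cast; ring)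
  rw [show -(m : ℤ) - 1 + 1 = -m by ring] at h
  rw [rankLe, h]
  exact card_subtype_add_compl _ _ (fun a => by omega)

theorem rank_bounds {n : ℕ} (hn : 0 < n) (p : n.Partition) :
    partitionRank p < n ∧ -(n : ℤ) < partitionRank p := by
  have h0 : p.parts ≠ 0 := by
    intro h
    have := p.parts_sum
    rw [h] at this
    simp at this; omega
  have h1 := sup_mem_of_ne_zero h0
  have h2 := p.parts_pos h1
  have h3 : p.parts.sup ≤ n := Nat.Partition.le_of_mem_parts h1
  have h4 := sum_pred_add_card p.parts (fun i hi => p.parts_pos hi)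
  rw [p.parts_sum] at h4
  have h5 : 0 < p.parts.card := Multiset.card_pos.2 h0
  simp only [partitionRank]
  omega

theorem rank_zero (p : Nat.Partition 0) : partitionRank p = 0 := by
  have : p = default := Subsingleton.elim _ _
  subst this
  simp [partitionRank]

theorem rankGe_eq_zero {m n : ℕ} (h : n ≤ m) (hm : 0 < m) : rankGe m n = 0 := by
  rw [rankGe, Nat.card_eq_zero]
  left
  refine ⟨fun p => ?_⟩
  rcases Nat.eq_zero_or_pos n with rfl | hn
  · have := rank_zero p.1; have := p.2; omega
  · have := rank_bounds hn p.1; have := p.2; omega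

theorem rankLe_eq_zero {m n : ℕ} (h : n ≤ m) (hm : 0 < m) : rankLe (-m) n = 0 := by
  rw [rankLe, Nat.card_eq_zero]
  left
  refine ⟨fun p => ?_⟩
  rcases Nat.eq_zero_or_pos n with rfl | hn
  · have := rank_zero p.1; have := p.2; omega
  · have := rank_bounds hn p.1; have := p.2; omega

theorem rankGe_zero_zero : rankGe 0 0 = 1 := by
  have := card_subtype_add_compl (fun p : Nat.Partition 0 => 0 ≤ partitionRank p)
    (fun _ => False) (fun p => by simp [rank_zero p])
  simpa [rankGe] using this

theorem partitionCount_zero : partitionCount 0 = 1 := by simp [partitionCount]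

theorem rankLe_zero_zero : rankLe 0 0 = 1 := by
  have := card_subtype_add_compl (fun p : Nat.Partition 0 => partitionRank p ≤ 0)
    (fun _ => False) (fun p => by simp [rank_zero p])
  simpa [rankLe] using this

/-- The symmetry `N(m, n) = N(-m, n)`, in cumulative form. -/
theorem rankLe_neg (n m : ℕ) : rankLe (-m) n = rankGe m n := by
  induction n using Nat.strong_induction_on generalizing m with
  | _ n ih =>
    rcases Nat.lt_or_ge m n with h | h
    · obtain ⟨k, rfl⟩ : ∃ k, n = k + m + 1 := ⟨n - m - 1, by omega⟩
      have h1 := rankGe_rec m k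
      have h2 := rankLe_rec m k
      have h3 := ih k (by omega) (m + 3)
      push_cast at h3
      omega
    · rcases Nat.eq_zero_or_pos m with rfl | hm
      · obtain rfl : n = 0 := by omega
        simpa [rankGe_zero_zero] using rankLe_zero_zero
      · rw [rankGe_eq_zero h hm, rankLe_eq_zero h hm]

open Classical in
theorem card_subtype_sum {α : Type*} [Fintype α] (P : α → Prop) :
    (Nat.card {a // P a} : ℤ) = ∑ a, if P a then 1 else 0 := by
  rw [Nat.card_eq_fintype_card, Fintype.card_subtype, Finset.card_filter]
  push_cast; rfl

/-- `∑ⱼ #{rank ≥ m + 5 j}`; the terms with `j > n` vanish for `m > 0`. -/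
noncomputable def rankSum (m n : ℕ) : ℤ := ∑ j ∈ Finset.range (n + 1), (rankGe ((m + 5 * j : ℕ)) n : ℤ)

theorem sum_indicator (n : ℕ) (ρ a : ℤ) (ha : 0 < a) (ha5 : a < 5) (h1 : ρ ≤ n) (h2 : -n ≤ ρ) :
    (if ρ % 5 = a then (1 : ℤ) else 0) = ∑ j ∈ Finset.range (n + 1),
      ((if ρ = a + 5 * j then 1 else 0) + (if ρ = -(5 - a) - 5 * j then 1 else 0)) := by
  by_cases h : ρ % 5 = a
  · rw [if_pos h]
    rcases le_or_gt 0 ρ with h0 | h0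
    · rw [Finset.sum_eq_single (ρ / 5).toNat]
      · rw [if_pos (by omega), if_neg (by omega)]; rfl
      · intro j hj hj'
        rw [if_neg (by omega), if_neg (by omega)]; rfl
      · intro hj; simp at hj; omega
    · rw [Finset.sum_eq_single (-ρ / 5).toNat]
      · rw [if_neg (by omega), if_pos (by omega)]; rfl
      · intro j hj hj'
        rw [if_neg (by omega), if_neg (by omega)]; rfl
      · intro hj; simp at hj; omega
  · rw [if_neg h, Finset.sum_eq_zero]
    intro j _
    rw [if_neg (by omega), if_neg (by omega)]; rfl

open Classical in
theorem NRank_eq (a n : ℕ) (ha : 0 < a) (ha5 : a < 5) :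
    (NRank a 5 n : ℤ) = rankSum a n - rankSum (a + 1) n + rankSum (5 - a) n - rankSum (6 - a) n := by
  have key : ∀ j : ℕ, ∑ p : n.Partition, ((if partitionRank p = a + 5 * j then (1 : ℤ) else 0) +
      (if partitionRank p = -(5 - a) - 5 * j then 1 else 0)) =
      (rankGe ((a + 5 * j : ℕ)) n : ℤ) - rankGe ((a + 1 + 5 * j : ℕ)) n +
      rankGe ((5 - a + 5 * j : ℕ)) n - rankGe ((6 - a + 5 * j : ℕ)) n := by
    intro j
    rw [← rankLe_neg n (5 - a + 5 * j), ← rankLe_neg n (6 - a + 5 * j)]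
    simp only [rankGe, rankLe]
    rw [card_subtype_sum, card_subtype_sum, card_subtype_sum, card_subtype_sum,
      ← Finset.sum_sub_distrib, ← Finset.sum_add_distrib, ← Finset.sum_sub_distrib]
    refine Finset.sum_congr rfl fun p _ => ?_
    split_ifs <;> omega
  rw [NRank, card_subtype_sum]
  simp only [rankSum]
  rw [← Finset.sum_sub_distrib, ← Finset.sum_add_distrib, ← Finset.sum_sub_distrib,
    ← Finset.sum_congr rfl (fun j _ => key j), Finset.sum_comm]
  refine Finset.sum_congr rfl fun p _ => ?_
  have hb : partitionRank p ≤ n ∧ -n ≤ partitionRank p := by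
    rcases Nat.eq_zero_or_pos n with rfl | hn
    · have := rank_zero p; omega
    · have := rank_bounds hn p; omega
  have := sum_indicator n _ a (by omega) (by omega) hb.1 hb.2
  convert this

open Classical in
theorem NRank_sum (n : ℕ) :
    NRank 0 5 n + NRank 1 5 n + NRank 2 5 n + NRank 3 5 n + NRank 4 5 n = partitionCount n := by
  zify
  have h := card_subtype_sum (fun _ : n.Partition => True)
  rw [Nat.card_congr (Equiv.subtypeUnivEquiv (fun _ => trivial))] at h
  simp only [NRank, partitionCount, card_subtype_sum]
  rw [h, ← Finset.sum_add_distrib, ← Finset.sum_add_distrib, ← Finset.sum_add_distrib,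
    ← Finset.sum_add_distrib]
  refine Finset.sum_congr rfl fun p _ => ?_
  have := Int.emod_nonneg (partitionRank p) (show (5 : ℤ) ≠ 0 by norm_num)
  have := Int.emod_lt_of_pos (partitionRank p) (show (0 : ℤ) < 5 by norm_num)
  split_ifs <;> omega

/-- By the symmetry of the rank, equidistribution modulo `5` follows from two linear relations. -/
theorem equidistribution_of (n : ℕ)
    (h1 : (partitionCount n : ℤ) - 5 * (rankSum 2 n - rankSum 4 n) = 0)
    (h0 : 2 * (partitionCount n : ℤ) - 5 * (rankSum 1 n - rankSum 5 n) = 0) :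
    NRank 0 5 n = NRank 1 5 n ∧ NRank 1 5 n = NRank 2 5 n ∧ NRank 2 5 n = NRank 3 5 n ∧
    NRank 3 5 n = NRank 4 5 n ∧ 5 * NRank 0 5 n = partitionCount n := by
  have e1 := NRank_eq 1 n (by norm_num) (by norm_num)
  have e2 := NRank_eq 2 n (by norm_num) (by norm_num)
  have e3 := NRank_eq 3 n (by norm_num) (by norm_num)
  have e4 := NRank_eq 4 n (by norm_num) (by norm_num)
  have e := NRank_sum n
  norm_num at e1 e2 e3 e4
  omega

/-! ### Triangular numbers and convergence lemmas -/

/-- The triangular numbers `n (n + 1) / 2`, for `n : ℤ`. -/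
def tri (n : ℤ) : ℤ := n * (n + 1) / 2

theorem two_mul_tri (n : ℤ) : 2 * tri n = n * (n + 1) := by
  have : (2 : ℤ) ∣ n * (n + 1) := (Int.even_mul_succ_self n).two_dvd
  rw [tri, Int.mul_ediv_cancel' this]

theorem tri_succ (n : ℤ) : tri (n + 1) = tri n + (n + 1) := by
  have h1 := two_mul_tri n
  have h2 := two_mul_tri (n + 1)
  linarith

theorem tri_neg (n : ℤ) : tri (-n) = tri n - n := by
  have h1 := two_mul_tri n
  have h2 := two_mul_tri (-n)
  linarith

theorem tri_nonneg (n : ℤ) : 0 ≤ tri n := by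
  have h1 := two_mul_tri n
  rcases le_or_gt 0 n with h | h <;> nlinarith

theorem gauss_summable_real {r c : ℝ} (hr : 0 < r) (hr1 : r < 1) (hc : 0 < c) :
    Summable fun n : ℤ => r ^ (3 * tri n) * c ^ n := by
  have key : ∀ d : ℝ, 0 < d → ∀ f : ℕ → ℝ, (∀ n, 0 < f n) →
      (∀ n, f (n + 1) = f n * (r ^ 3) ^ n * d) → Summable f := by
    intro d hd f hf hrec
    refine summable_of_ratio_test_tendsto_lt_one (l := 0) (by norm_num)
      (Eventually.of_forall fun n => (hf n).ne') ?_
    have : ∀ n, ‖f (n + 1)‖ / ‖f n‖ = (r ^ 3) ^ n * d := by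
      intro n
      rw [Real.norm_of_nonneg (hf _).le, Real.norm_of_nonneg (hf _).le, hrec]
      have := (hf n).ne'
      field_simp
    simp only [this]
    have h := (tendsto_pow_atTop_nhds_zero_of_lt_one (r := r ^ 3) (by positivity)
      (pow_lt_one₀ hr.le hr1 (by norm_num))).mul_const d
    simpa using h
  have hr0 := hr.ne'
  have hc0 := hc.ne'
  refine Summable.of_nat_of_neg ?_ ?_
  · refine key (r ^ 3 * c) (by positivity) _ (fun n => by positivity) fun n => ?_
    push_cast
    rw [tri_succ, mul_add, mul_add, zpow_add₀ hr0, zpow_add₀ hr0, zpow_add₀ hc0, zpow_mul r 3 n]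
    norm_cast
    simp only [pow_one, mul_one]
    ring
  · refine key (c⁻¹) (by positivity) _ (fun n => by positivity) fun n => ?_
    have : tri (-((n + 1 : ℕ) : ℤ)) = tri (-(n : ℤ)) + n := by
      push_cast
      rw [tri_neg, tri_neg, tri_succ]; ring
    rw [this, mul_add, zpow_add₀ hr0, zpow_mul r 3 n]
    have h2 : c ^ (-((n + 1 : ℕ) : ℤ)) = c ^ (-(n : ℤ)) * c⁻¹ := by
      push_cast
      rw [neg_add, zpow_add₀ hc0, zpow_neg_one]
    rw [h2]
    norm_cast
    ring

theorem gauss_summable {p c : ℂ} (hp : p ≠ 0) (hp1 : ‖p‖ < 1) (hc : c ≠ 0) :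
    Summable fun n : ℤ => ‖(-1 : ℂ) ^ n * p ^ (3 * tri n) * c ^ n‖ := by
  have := gauss_summable_real (norm_pos_iff.2 hp) hp1 (norm_pos_iff.2 hc)
  refine this.congr fun n => ?_
  simp [norm_zpow]

/-- The points `p ^ (-n)` different from `w₀` keep a positive distance from a neighbourhood
of `w₀`. -/
theorem exists_sep {p w₀ : ℂ} (hp : p ≠ 0) (hp1 : ‖p‖ < 1) (hw : w₀ ≠ 0) :
    ∃ δ > 0, ∀ w ∈ Metric.ball w₀ δ, ∀ n : ℤ, p ^ (-n) ≠ w₀ → δ ≤ ‖p ^ (-n) - w‖ := by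
  have hp0 := norm_pos_iff.2 hp
  have hw0 := norm_pos_iff.2 hw
  -- only finitely many of the points lie in the annulus `‖w₀‖/2 ≤ ‖z‖ ≤ 2‖w₀‖`
  obtain ⟨N, hN1, hN2⟩ : ∃ N : ℕ, ‖p‖ ^ N < ‖w₀‖ / 2 ∧ 2 * ‖w₀‖ < (‖p‖ ^ N)⁻¹ := by
    have h := tendsto_pow_atTop_nhds_zero_of_lt_one hp0.le hp1
    have h1 := (h.eventually_lt_const (show (0 : ℝ) < ‖w₀‖ / 2 by positivity)).and
      (h.eventually_lt_const (show (0 : ℝ) < (2 * ‖w₀‖)⁻¹ by positivity))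
    obtain ⟨N, h1, h2⟩ := h1.exists
    refine ⟨N, h1, ?_⟩
    rw [lt_inv_comm₀ (by positivity) (by positivity)]
    exact h2
  have hfar : ∀ n : ℤ, n ∉ Finset.Icc (-(N : ℤ)) N → ‖w₀‖ / 2 ≤ ‖p ^ (-n) - w₀‖ := by
    intro n hn
    have hn : N < n ∨ n < -N := by simp at hn; omega
    rcases hn with h | h
    · have : (‖p‖ ^ N)⁻¹ ≤ ‖p ^ (-n)‖ := by
        rw [norm_zpow, zpow_neg, ← zpow_natCast]
        gcongr 1
        exact zpow_le_zpow_right_of_le_one₀ hp0 hp1.le h.le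
      have h3 := norm_sub_norm_le (p ^ (-n)) w₀
      linarith
    · have : ‖p ^ (-n)‖ ≤ ‖p‖ ^ N := by
        rw [norm_zpow, ← zpow_natCast]
        exact zpow_le_zpow_right_of_le_one₀ hp0 hp1.le (by omega)
      have h3 := norm_sub_norm_le w₀ (p ^ (-n))
      rw [norm_sub_rev] at h3
      linarith
  obtain ⟨δ, hδ, hδn⟩ : ∃ δ > 0, ∀ n ∈ Finset.Icc (-(N : ℤ)) N, p ^ (-n) ≠ w₀ →
      δ ≤ ‖p ^ (-n) - w₀‖ := by
    have : ∀ s : Finset ℤ, ∃ δ > 0, ∀ n ∈ s, p ^ (-n) ≠ w₀ → δ ≤ ‖p ^ (-n) - w₀‖ := by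
      intro s
      induction s using Finset.induction_on with
      | empty => exact ⟨1, one_pos, by simp⟩
      | insert a s _ ih =>
        obtain ⟨δ, hδ, h⟩ := ih
        by_cases ha : p ^ (-a) = w₀
        · refine ⟨δ, hδ, fun n hn hne => ?_⟩
          rcases Finset.mem_insert.1 hn with rfl | hn
          · exact absurd ha hne
          · exact h n hn hne
        · have h0 : 0 < ‖p ^ (-a) - w₀‖ := norm_pos_iff.2 (sub_ne_zero.2 ha)
          refine ⟨min δ ‖p ^ (-a) - w₀‖, lt_min hδ h0, fun n hn hne => ?_⟩
          rcases Finset.mem_insert.1 hn with rfl | hn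
          · exact min_le_right _ _
          · exact (min_le_left _ _).trans (h n hn hne)
    exact this _
  refine ⟨min δ (‖w₀‖ / 2) / 2, by positivity, fun w hw n hn => ?_⟩
  have h1 : min δ (‖w₀‖ / 2) ≤ ‖p ^ (-n) - w₀‖ := by
    by_cases h : n ∈ Finset.Icc (-(N : ℤ)) N
    · exact (min_le_left _ _).trans (hδn n h hn)
    · exact (min_le_right _ _).trans (hfar n h)
  have h2 : ‖w - w₀‖ < min δ (‖w₀‖ / 2) / 2 := by simpa [dist_eq_norm] using hw
  have h3 : ‖p ^ (-n) - w₀‖ ≤ ‖p ^ (-n) - w‖ + ‖w - w₀‖ := norm_sub_le_norm_sub_add_norm_sub _ _ _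
  linarith

theorem sep_bound {p w : ℂ} (hp : p ≠ 0) {δ : ℝ} (hδ : 0 < δ) {n : ℤ} (h : δ ≤ ‖p ^ (-n) - w‖) :
    ‖(1 - w * p ^ n)⁻¹‖ ≤ δ⁻¹ * ‖(p⁻¹) ^ n‖ := by
  have h1 : 1 - w * p ^ n = (p ^ (-n) - w) * p ^ n := by
    rw [sub_mul, ← zpow_add₀ hp]; simp
  rw [h1, mul_inv, norm_mul, inv_zpow, norm_inv]
  gcongr

/-! ### Generating functions -/

theorem partitionCount_le (n : ℕ) : partitionCount n ≤ 2 ^ n := by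
  rw [partitionCount]
  calc Nat.card n.Partition ≤ Nat.card (Composition n) :=
        Nat.card_le_card_of_surjective _ Nat.Partition.ofComposition_surj
    _ = 2 ^ (n - 1) := by rw [Nat.card_eq_fintype_card, composition_card]
    _ ≤ 2 ^ n := Nat.pow_le_pow_right (by norm_num) (by omega)

theorem rankGe_le (m : ℤ) (n : ℕ) : rankGe m n ≤ partitionCount n :=
  Nat.card_le_card_of_injective _ Subtype.val_injective

theorem rankSum_nonneg (m n : ℕ) : 0 ≤ rankSum m n :=
  Finset.sum_nonneg fun _ _ => Int.natCast_nonneg _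

theorem rankSum_le (m n : ℕ) : rankSum m n ≤ (n + 1) * 2 ^ n := by
  calc rankSum m n ≤ ∑ _j ∈ Finset.range (n + 1), (2 ^ n : ℤ) :=
        Finset.sum_le_sum fun j _ => by exact_mod_cast (rankGe_le _ n).trans (partitionCount_le n)
    _ = (n + 1) * 2 ^ n := by simp

theorem rankSum_eq_zero {m n : ℕ} (h : n ≤ m) (hm : 0 < m) : rankSum m n = 0 :=
  Finset.sum_eq_zero fun j _ => by
    rw [rankGe_eq_zero (by omega) (by omega)]; rfl

theorem rankSum_sub {m : ℕ} (hm : 0 < m) (n : ℕ) :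
    rankSum m n - rankSum (m + 5) n = rankGe m n := by
  rw [rankSum, rankSum, Finset.sum_range_succ', Finset.sum_range_succ]
  rw [rankGe_eq_zero (m := m + 5 + 5 * n) (by omega) (by omega)]
  have : ∀ j : ℕ, m + 5 * (j + 1) = m + 5 + 5 * j := fun j => by ring
  simp [this]

section Series

variable {q : ℂ}

/-- A power series whose coefficients are `O((n + 1) 2 ^ n)` converges for `‖q‖ < 1/2`. -/
theorem coeff_summable (hq : ‖q‖ < 1 / 2) {a : ℕ → ℤ} (ha : ∀ n, |a n| ≤ (n + 1) * 2 ^ n) :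
    Summable fun n => ‖(a n : ℂ) * q ^ n‖ := by
  have h1 : Summable fun n : ℕ => ((n : ℝ) + 1) * (2 * ‖q‖) ^ n := by
    have hx : ‖(2 * ‖q‖ : ℝ)‖ < 1 := by
      rw [Real.norm_of_nonneg (by positivity)]; linarith
    have h2 := summable_pow_mul_geometric_of_norm_lt_one 1 hx
    have h3 := summable_geometric_of_norm_lt_one hx
    refine (h2.add h3).congr fun n => by ring
  refine Summable.of_nonneg_of_le (fun _ => norm_nonneg _) (fun n => ?_) h1
  rw [norm_mul, norm_pow, mul_pow, ← mul_assoc]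
  gcongr
  have := ha n
  rw [Complex.norm_intCast]
  exact_mod_cast this

theorem rankGe_abs_le (m : ℤ) (n : ℕ) : |(rankGe m n : ℤ)| ≤ (n + 1) * 2 ^ n := by
  have h1 := (rankGe_le m n).trans (partitionCount_le n)
  rw [abs_of_nonneg (Int.natCast_nonneg _)]
  have h2 : (rankGe m n : ℤ) ≤ 2 ^ n := by exact_mod_cast h1
  nlinarith [show (0 : ℤ) ≤ n * 2 ^ n by positivity]

theorem partitionCount_abs_le (n : ℕ) : |(partitionCount n : ℤ)| ≤ (n + 1) * 2 ^ n := by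
  rw [abs_of_nonneg (Int.natCast_nonneg _)]
  have h2 : (partitionCount n : ℤ) ≤ 2 ^ n := by exact_mod_cast partitionCount_le n
  nlinarith [show (0 : ℤ) ≤ n * 2 ^ n by positivity]

theorem rankSum_abs_le (m n : ℕ) : |rankSum m n| ≤ (n + 1) * 2 ^ n := by
  rw [abs_of_nonneg (rankSum_nonneg m n)]
  exact rankSum_le m n

/-- `∑ p(n) q ^ n`. -/
noncomputable def genP (q : ℂ) : ℂ := ∑' n, ((partitionCount n : ℤ) : ℂ) * q ^ n

/-- The generating function of the partitions of rank at least `m`. -/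
noncomputable def genA (m : ℕ) (q : ℂ) : ℂ := ∑' n, ((rankGe m n : ℤ) : ℂ) * q ^ n

/-- The generating function of `rankSum m`. -/
noncomputable def genV (m : ℕ) (q : ℂ) : ℂ := ∑' n, (rankSum m n : ℂ) * q ^ n

theorem genP_summable (hq : ‖q‖ < 1 / 2) : Summable fun n => ((partitionCount n : ℤ) : ℂ) * q ^ n :=
  (coeff_summable hq partitionCount_abs_le).of_norm

theorem genA_summable (hq : ‖q‖ < 1 / 2) (m : ℕ) :
    Summable fun n => ((rankGe m n : ℤ) : ℂ) * q ^ n :=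
  (coeff_summable hq (rankGe_abs_le m)).of_norm

theorem genV_summable (hq : ‖q‖ < 1 / 2) (m : ℕ) : Summable fun n => (rankSum m n : ℂ) * q ^ n :=
  (coeff_summable hq (rankSum_abs_le m)).of_norm

theorem genA_shift (hq : ‖q‖ < 1 / 2) (m : ℕ) :
    genA m q = (∑ n ∈ Finset.range (m + 1), ((rankGe m n : ℤ) : ℂ) * q ^ n) +
      q ^ (m + 1) * (genP q - genA (m + 3) q) := by
  rw [genA, ← (genA_summable hq m).sum_add_tsum_nat_add (m + 1)]
  congr 1
  rw [genP, genA, ← (genP_summable hq).tsum_sub (genA_summable hq (m + 3)), ← tsum_mul_left]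
  refine tsum_congr fun n => ?_
  have h := rankGe_rec m n
  rw [← h, show n + (m + 1) = n + m + 1 by ring]
  push_cast
  ring

theorem genA_rec (hq : ‖q‖ < 1 / 2) {m : ℕ} (hm : 0 < m) :
    genA m q = q ^ (m + 1) * (genP q - genA (m + 3) q) := by
  rw [genA_shift hq m, Finset.sum_eq_zero, zero_add]
  intro n hn
  rw [rankGe_eq_zero (by simpa [Nat.lt_succ_iff] using hn) hm]
  simp

theorem genP_eq (hq : ‖q‖ < 1 / 2) : genP q = 1 + q * (genP q - genA 3 q) + genA 1 q := by
  have h0 := genA_shift hq 0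
  have h : genP q = genA 0 q + genA 1 q := by
    rw [genP, genA, genA, ← (genA_summable hq 0).tsum_add (genA_summable hq 1)]
    refine tsum_congr fun n => ?_
    have h1 := rankLe_neg n 0
    have h2 := card_subtype_add_compl (fun p : n.Partition => (1 : ℤ) ≤ partitionRank p)
      (fun p => partitionRank p ≤ 0) (fun p => by omega)
    have h3 : rankGe 1 n + rankLe 0 n = partitionCount n := h2
    simp only [Nat.cast_zero, neg_zero] at h1
    rw [← h3, h1]
    push_cast
    ring
  simp only [zero_add, Finset.sum_range_one, pow_zero, mul_one, pow_one] at h0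
  have h1 : genA 0 q = 1 + q * (genP q - genA 3 q) := by simpa [rankGe_zero_zero] using h0
  linear_combination h + h1

/-- `∑_{k ≥ 1} (-1) ^ (k - 1) q ^ (k (3 k - 1) / 2 + k m)`, the factor by which the generating
function of the partitions of rank at least `m` differs from `genP`. -/
noncomputable def sig (m : ℕ) (q : ℂ) : ℂ :=
  ∑' k : ℕ, (-1) ^ k * q ^ (3 * (k + 1).choose 2 + (k + 1) * (m + 1))

theorem sig_term_le (hq : ‖q‖ < 1 / 2) (m k : ℕ) :
    ‖(-1) ^ k * q ^ (3 * (k + 1).choose 2 + (k + 1) * (m + 1))‖ ≤ (1 / 2) ^ m * (1 / 2) ^ k := by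
  rw [norm_mul, norm_pow, norm_neg, norm_one, one_pow, one_mul, norm_pow, ← pow_add]
  calc ‖q‖ ^ (3 * (k + 1).choose 2 + (k + 1) * (m + 1)) ≤ ‖q‖ ^ (m + k) :=
        pow_le_pow_of_le_one (norm_nonneg _) (by linarith) (by nlinarith [Nat.zero_le (k * m)])
    _ ≤ _ := by gcongr

theorem half_summable (m : ℕ) : Summable fun k : ℕ => (1 / 2 : ℝ) ^ m * (1 / 2) ^ k :=
  (summable_geometric_of_lt_one (by norm_num) (by norm_num)).mul_left _

theorem sig_summable (hq : ‖q‖ < 1 / 2) (m : ℕ) :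
    Summable fun k : ℕ => (-1) ^ k * q ^ (3 * (k + 1).choose 2 + (k + 1) * (m + 1)) :=
  Summable.of_norm_bounded (half_summable m) (sig_term_le hq m)

theorem sig_rec (hq : ‖q‖ < 1 / 2) (m : ℕ) : sig m q = q ^ (m + 1) * (1 - sig (m + 3) q) := by
  have hs := sig_summable hq m
  rw [sig, hs.tsum_eq_zero_add, mul_sub, sub_eq_add_neg, sig, ← tsum_mul_left, ← tsum_neg]
  congr 1
  · norm_num
  · refine tsum_congr fun k => ?_
    have : 3 * (k + 1 + 1).choose 2 + (k + 1 + 1) * (m + 1) =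
        (m + 1) + (3 * (k + 1).choose 2 + (k + 1) * (m + 3 + 1)) := by
      rw [Nat.choose_succ_succ' (k + 1) 1, Nat.choose_one_right]; ring
    rw [this, pow_add q (m + 1), pow_succ (-1 : ℂ)]
    ring

theorem norm_genA_le (hq : ‖q‖ < 1 / 2) (m : ℕ) :
    ‖genA m q‖ ≤ ∑' n, ‖((partitionCount n : ℤ) : ℂ) * q ^ n‖ := by
  have h1 := coeff_summable hq (rankGe_abs_le m)
  refine (norm_tsum_le_tsum_norm h1).trans
    (h1.tsum_le_tsum (fun n => ?_) (coeff_summable hq partitionCount_abs_le))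
  rw [norm_mul, norm_mul]
  gcongr
  simp only [Int.cast_natCast, Complex.norm_natCast]
  exact_mod_cast rankGe_le m n

theorem norm_sig_le (hq : ‖q‖ < 1 / 2) (m : ℕ) : ‖sig m q‖ ≤ (1 / 2) ^ m * 2 := by
  have := tsum_of_norm_bounded (half_summable m).hasSum (sig_term_le hq m)
  rwa [tsum_mul_left, tsum_geometric_of_lt_one (by norm_num) (by norm_num),
    show (1 - 1 / 2 : ℝ)⁻¹ = 2 by norm_num] at this

/-- The difference of the two sides satisfies a homogeneous recurrence in `m`, and a bounded solution
of it vanishes. -/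
theorem genA_eq (hq : ‖q‖ < 1 / 2) {m : ℕ} (hm : 0 < m) : genA m q = genP q * sig m q := by
  -- the difference picks up a factor of size less than `1/2` at each step and is bounded
  set C := (∑' n, ‖((partitionCount n : ℤ) : ℂ) * q ^ n‖) + ‖genP q‖ * 2 with hC
  have hC0 : 0 ≤ C := by
    have : 0 ≤ ∑' n, ‖((partitionCount n : ℤ) : ℂ) * q ^ n‖ := tsum_nonneg fun _ => norm_nonneg _
    positivity
  have hb : ∀ m, ‖genA m q - genP q * sig m q‖ ≤ C := by
    intro m
    refine (norm_sub_le _ _).trans (add_le_add (norm_genA_le hq m) ?_)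
    rw [norm_mul]
    gcongr
    refine (norm_sig_le hq m).trans ?_
    have : (1 / 2 : ℝ) ^ m ≤ 1 := pow_le_one₀ (by norm_num) (by norm_num)
    linarith
  have hk : ∀ k m, 0 < m → ‖genA m q - genP q * sig m q‖ ≤ (1 / 2) ^ k * C := by
    intro k
    induction k with
    | zero => intro m _; simpa using hb m
    | succ k ih =>
      intro m hm
      have h1 : genA m q - genP q * sig m q =
          -(q ^ (m + 1) * (genA (m + 3) q - genP q * sig (m + 3) q)) := by
        rw [genA_rec hq hm, sig_rec hq m]; ring
      rw [h1, norm_neg, norm_mul, norm_pow]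
      have h2 : ‖q‖ ^ (m + 1) ≤ 1 / 2 := by
        calc ‖q‖ ^ (m + 1) ≤ ‖q‖ ^ 1 :=
              pow_le_pow_of_le_one (norm_nonneg _) (by linarith) (by omega)
          _ ≤ 1 / 2 := by rw [pow_one]; exact hq.le
      calc _ ≤ 1 / 2 * ((1 / 2) ^ k * C) := by
            gcongr
            exact ih (m + 3) (by omega)
        _ = _ := by ring
  have ht : Tendsto (fun k : ℕ => (1 / 2 : ℝ) ^ k * C) atTop (𝓝 (0 * C)) :=
    (tendsto_pow_atTop_nhds_zero_of_lt_one (by norm_num) (by norm_num)).mul_const C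
  rw [zero_mul] at ht
  have h0 := ge_of_tendsto' ht fun k => hk k m hm
  exact sub_eq_zero.1 (norm_le_zero_iff.1 h0)

/-- Euler's pentagonal number theorem, with the series split into its two halves. -/
theorem genP_mul_sig (hq : ‖q‖ < 1 / 2) : genP q * (1 - sig 0 q - sig 1 q) = 1 := by
  have h1 := genP_eq hq
  rw [genA_eq hq (m := 3) (by norm_num), genA_eq hq (m := 1) (by norm_num)] at h1
  have h2 := sig_rec hq 0
  simp only [zero_add, pow_one] at h2
  linear_combination h1 - genP q * h2

/-- `∑_{j ≥ 0} sig (m + 5 j)`, with the geometric series summed. -/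
noncomputable def ser (m : ℕ) (q : ℂ) : ℂ :=
  ∑' k : ℕ, (-1) ^ k * q ^ (3 * (k + 1).choose 2 + (k + 1) * (m + 1)) / (1 - q ^ (5 * (k + 1)))

theorem half_le_denom (hq : ‖q‖ < 1 / 2) (k : ℕ) : 1 / 2 ≤ ‖1 - q ^ (5 * (k + 1))‖ := by
  have h1 := norm_sub_norm_le 1 (q ^ (5 * (k + 1)))
  have h2 : ‖q ^ (5 * (k + 1))‖ ≤ 1 / 2 := by
    rw [norm_pow]
    calc ‖q‖ ^ (5 * (k + 1)) ≤ ‖q‖ ^ 1 :=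
          pow_le_pow_of_le_one (norm_nonneg _) (by linarith) (by omega)
      _ ≤ 1 / 2 := by rw [pow_one]; exact hq.le
  rw [norm_one] at h1
  linarith

theorem ser_term_le (hq : ‖q‖ < 1 / 2) (m k : ℕ) :
    ‖(-1) ^ k * q ^ (3 * (k + 1).choose 2 + (k + 1) * (m + 1)) / (1 - q ^ (5 * (k + 1)))‖ ≤
      2 * ((1 / 2) ^ m * (1 / 2) ^ k) := by
  have h := half_le_denom hq k
  rw [norm_div, div_le_iff₀ (by linarith)]
  have h2 := sig_term_le hq m k
  have h3 : (0 : ℝ) ≤ (1 / 2) ^ m * (1 / 2) ^ k := by positivity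
  nlinarith

theorem ser_summable (hq : ‖q‖ < 1 / 2) (m : ℕ) : Summable fun k : ℕ =>
    (-1) ^ k * q ^ (3 * (k + 1).choose 2 + (k + 1) * (m + 1)) / (1 - q ^ (5 * (k + 1))) :=
  Summable.of_norm_bounded ((half_summable m).mul_left 2) (ser_term_le hq m)

theorem norm_ser_le (hq : ‖q‖ < 1 / 2) (m : ℕ) : ‖ser m q‖ ≤ (1 / 2) ^ m * 4 := by
  have := tsum_of_norm_bounded ((half_summable m).mul_left 2).hasSum (ser_term_le hq m)
  rw [tsum_mul_left, tsum_mul_left, tsum_geometric_of_lt_one (by norm_num) (by norm_num),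
    show (1 - 1 / 2 : ℝ)⁻¹ = 2 by norm_num] at this
  refine this.trans (le_of_eq (by ring))

theorem ser_sub (hq : ‖q‖ < 1 / 2) (m : ℕ) : ser m q - ser (m + 5) q = sig m q := by
  rw [ser, ser, sig, ← (ser_summable hq m).tsum_sub (ser_summable hq (m + 5))]
  refine tsum_congr fun k => ?_
  have h : 1 - q ^ (5 * (k + 1)) ≠ 0 := by
    have := half_le_denom hq k
    intro h0
    rw [h0, norm_zero] at this
    linarith
  rw [← sub_div, div_eq_iff h]
  ring

theorem genV_sub (hq : ‖q‖ < 1 / 2) {m : ℕ} (hm : 0 < m) :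
    genV m q - genV (m + 5) q = genA m q := by
  rw [genV, genV, genA, ← (genV_summable hq m).tsum_sub (genV_summable hq (m + 5))]
  refine tsum_congr fun n => ?_
  rw [← rankSum_sub hm n]
  push_cast
  ring

theorem genV_tendsto (hq : ‖q‖ < 1 / 2) : Tendsto (fun m => genV m q) atTop (𝓝 0) := by
  have hb := coeff_summable hq (a := fun n => (n + 1) * 2 ^ n)
    (fun n => by rw [abs_of_nonneg (by positivity)])
  have h := tendsto_tsum_of_dominated_convergence (𝓕 := atTop)
    (f := fun (m : ℕ) (n : ℕ) => (rankSum m n : ℂ) * q ^ n) (g := fun _ => 0) hb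
    (fun n => tendsto_const_nhds.congr' ?_) (Eventually.of_forall fun m n => ?_)
  · simpa [genV] using h
  · filter_upwards [eventually_ge_atTop (n + 1)] with m hm
    rw [rankSum_eq_zero (by omega) (by omega)]
    simp
  · rw [norm_mul, norm_mul]
    gcongr
    rw [Complex.norm_intCast, Complex.norm_intCast]
    have := rankSum_abs_le m n
    have h2 : (0 : ℤ) ≤ (n + 1) * 2 ^ n := by positivity
    rw [← abs_of_nonneg h2] at this
    exact_mod_cast this

/-- The difference of the two sides is unchanged under `m ↦ m + 5` and tends to `0` as `m → ∞`. -/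
theorem genV_eq (hq : ‖q‖ < 1 / 2) {m : ℕ} (hm : 0 < m) : genV m q = genP q * ser m q := by
  have hper : ∀ j : ℕ, genV (m + 5 * j) q - genP q * ser (m + 5 * j) q =
      genV m q - genP q * ser m q := by
    intro j
    induction j with
    | zero => simp
    | succ j ih =>
      rw [← ih]
      have h1 := genV_sub hq (m := m + 5 * j) (by omega)
      have h2 := ser_sub hq (m + 5 * j)
      rw [genA_eq hq (by omega)] at h1
      rw [show m + 5 * (j + 1) = m + 5 * j + 5 by ring]
      linear_combination -h1 + genP q * h2
  have hs : Tendsto (fun m => ser m q) atTop (𝓝 0) := by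
    refine squeeze_zero_norm (norm_ser_le hq) ?_
    simpa using (tendsto_pow_atTop_nhds_zero_of_lt_one (r := (1 / 2 : ℝ)) (by norm_num)
      (by norm_num)).mul_const 4
  have ht := (genV_tendsto hq).sub (hs.const_mul (genP q))
  have hj : Tendsto (fun j : ℕ => m + 5 * j) atTop atTop :=
    tendsto_atTop_mono (fun j => by simp only [id]; omega) tendsto_id
  have h0 := ht.comp hj
  have h1 : Tendsto (fun _ : ℕ => genV m q - genP q * ser m q) atTop (𝓝 0) := by
    simpa [Function.comp_def, hper] using h0
  exact sub_eq_zero.1 (tendsto_nhds_unique tendsto_const_nhds h1)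

end Series

/-- The theta series `∑ (-1) ^ n p ^ (3 n (n + 1) / 2) c ^ n` over `n : ℤ`. -/
noncomputable def T (p c : ℂ) : ℂ := ∑' n : ℤ, (-1) ^ n * p ^ (3 * tri n) * c ^ n

/-- `∑ (-1) ^ n q ^ (n (3 n + 1) / 2 + b n) / (1 - q ^ (5 n))` over the nonzero integers `n`; the
term `n = 0` is `1 / 0 = 0`. -/
noncomputable def bil (b : ℤ) (q : ℂ) : ℂ :=
  ∑' n : ℤ, (-1) ^ n * q ^ (3 * tri n) * (q ^ (b - 1)) ^ n / (1 - (q ^ 5) ^ n)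

theorem tsum_int_split {f : ℤ → ℂ} (hf : Summable f) :
    ∑' n, f n = f 0 + (∑' k : ℕ, f ((k : ℤ) + 1) + ∑' k : ℕ, f (-((k : ℤ) + 1))) := by
  have h1 : Summable fun n : ℕ => f n := hf.comp_injective Nat.cast_injective
  have h2 : Summable fun n : ℕ => f (-((n : ℤ) + 1)) :=
    hf.comp_injective fun a b h => by simpa using h
  rw [tsum_of_nat_of_neg_add_one h1 h2, h1.tsum_eq_zero_add]
  push_cast
  ring

theorem tri_nat_succ (k : ℕ) : tri ((k : ℤ) + 1) = ((k + 1).choose 2 : ℕ) + (k + 1) := by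
  induction k with
  | zero => rfl
  | succ k ih =>
    push_cast
    rw [tri_succ, ih, Nat.choose_succ_succ' (k + 1) 1, Nat.choose_one_right]
    push_cast
    ring

theorem zpow_tri_pos {q : ℂ} (hq0 : q ≠ 0) (b : ℤ) (k m : ℕ) (hm : (m : ℤ) = b + 1) :
    (-1) ^ ((k : ℤ) + 1) * q ^ (3 * tri ((k : ℤ) + 1)) * (q ^ (b - 1)) ^ ((k : ℤ) + 1) =
      -((-1) ^ k * q ^ (3 * (k + 1).choose 2 + (k + 1) * (m + 1))) := by
  rw [← zpow_mul, mul_assoc, ← zpow_add₀ hq0, ← zpow_natCast q, zpow_add_one₀ (by norm_num),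
    zpow_natCast, tri_nat_succ]
  push_cast
  rw [hm]
  ring_nf

theorem zpow_tri_neg {q : ℂ} (hq0 : q ≠ 0) (b : ℤ) (k m : ℕ) (hm : (m : ℤ) = -b) :
    (-1) ^ (-((k : ℤ) + 1)) * q ^ (3 * tri (-((k : ℤ) + 1))) * (q ^ (b - 1)) ^ (-((k : ℤ) + 1)) =
      -((-1) ^ k * q ^ (3 * (k + 1).choose 2 + (k + 1) * (m + 1))) := by
  rw [← zpow_mul, mul_assoc, ← zpow_add₀ hq0, ← zpow_natCast q, zpow_neg, ← inv_zpow,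
    inv_neg, inv_one, zpow_add_one₀ (by norm_num), zpow_natCast, tri_neg, tri_nat_succ]
  push_cast
  rw [hm]
  ring_nf

theorem T_inv_eq {q : ℂ} (hq0 : q ≠ 0) (hq : ‖q‖ < 1 / 2) :
    T q q⁻¹ = 1 - sig 0 q - sig 1 q := by
  have hs := (gauss_summable hq0 (by linarith) (inv_ne_zero hq0)).of_norm
  have h1 := fun k => zpow_tri_pos hq0 0 k 1 (by norm_num)
  have h2 := fun k => zpow_tri_neg hq0 0 k 0 (by norm_num)
  simp only [zero_sub, zpow_neg_one] at h1 h2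
  rw [T, tsum_int_split hs]
  simp only [h1, h2, tsum_neg]
  rw [sig, sig]
  norm_num [tri]
  ring

theorem genP_mul_T {q : ℂ} (hq0 : q ≠ 0) (hq : ‖q‖ < 1 / 2) : genP q * T q q⁻¹ = 1 := by
  rw [T_inv_eq hq0 hq, genP_mul_sig hq]

theorem zpow_ne_one {p : ℂ} (hp1 : ‖p‖ < 1) {n : ℤ} (hn : n ≠ 0) : p ^ n ≠ 1 := by
  intro h
  have h1 : ‖p‖ ^ n = 1 := by rw [← norm_zpow, h, norm_one]
  exact hn ((zpow_eq_one_iff_right₀ (norm_nonneg _) hp1.ne).1 h1)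

theorem bil_summable {q : ℂ} (hq0 : q ≠ 0) (hq : ‖q‖ < 1) (b : ℤ) :
    Summable fun n : ℤ => (-1) ^ n * q ^ (3 * tri n) * (q ^ (b - 1)) ^ n / (1 - (q ^ 5) ^ n) := by
  have h5 : q ^ 5 ≠ 0 := pow_ne_zero _ hq0
  have h51 : ‖q ^ 5‖ < 1 := by
    rw [norm_pow]; exact pow_lt_one₀ (norm_nonneg _) hq (by norm_num)
  obtain ⟨δ, hδ, h⟩ := exists_sep h5 h51 one_ne_zero
  have hs := (gauss_summable hq0 hq (c := q ^ (b - 1) * (q ^ 5)⁻¹)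
    (mul_ne_zero (zpow_ne_zero _ hq0) (inv_ne_zero h5))).mul_left δ⁻¹
  refine Summable.of_norm_bounded hs fun n => ?_
  rcases eq_or_ne n 0 with rfl | hn
  · simp; positivity
  · have h1 := sep_bound h5 hδ (h 1 (Metric.mem_ball_self hδ) n
      (zpow_ne_one h51 (neg_ne_zero.2 hn)))
    rw [one_mul] at h1
    rw [div_eq_mul_inv, norm_mul, mul_zpow, ← mul_assoc, norm_mul _ (((q ^ 5)⁻¹) ^ n)]
    calc _ ≤ ‖(-1) ^ n * q ^ (3 * tri n) * (q ^ (b - 1)) ^ n‖ * (δ⁻¹ * ‖((q ^ 5)⁻¹) ^ n‖) := by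
          gcongr
      _ = _ := by ring

/-- The positive and the negative indices of the bilateral sum give the two unilateral sums. -/
theorem bil_eq {q : ℂ} (hq0 : q ≠ 0) (hq : ‖q‖ < 1 / 2) (b : ℕ) (hb : b ≤ 5) :
    bil b q = ser (5 - b) q - ser (1 + b) q := by
  have h1 := fun k => zpow_tri_pos hq0 b k (1 + b) (by push_cast; ring)
  have h2 := fun k => zpow_tri_neg hq0 (b - 5) k (5 - b) (by omega)
  have h5 : q ^ 5 ≠ 0 := pow_ne_zero _ hq0
  have hn : ∀ k : ℕ, (1 : ℂ) - (q ^ 5) ^ ((k : ℤ) + 1) = 1 - q ^ (5 * (k + 1)) := by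
    intro k
    rw [pow_mul]
    norm_cast
  have hd : ∀ k : ℕ, (1 : ℂ) - q ^ (5 * (k + 1)) ≠ 0 := by
    intro k h0
    have := half_le_denom hq k
    rw [h0, norm_zero] at this
    linarith
  have h3 : ∀ k : ℕ, (-1) ^ (-((k : ℤ) + 1)) * q ^ (3 * tri (-((k : ℤ) + 1))) *
      (q ^ ((b : ℤ) - 1)) ^ (-((k : ℤ) + 1)) / (1 - (q ^ 5) ^ (-((k : ℤ) + 1))) =
      (-1) ^ k * q ^ (3 * (k + 1).choose 2 + (k + 1) * (5 - b + 1)) / (1 - q ^ (5 * (k + 1))) := by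
    intro k
    have e1 : q ^ ((b : ℤ) - 1) = q ^ ((b : ℤ) - 5 - 1) * q ^ 5 := by
      rw [← zpow_natCast, ← zpow_add₀ hq0]; congr 1; push_cast; ring
    have hX : (q ^ 5) ^ ((k : ℤ) + 1) ≠ 0 := zpow_ne_zero _ h5
    have e2 : 1 - (q ^ 5) ^ (-((k : ℤ) + 1)) =
        -(1 - q ^ (5 * (k + 1))) * (q ^ 5) ^ (-((k : ℤ) + 1)) := by
      rw [← hn, zpow_neg]
      field_simp
      ring
    rw [e1, mul_zpow, ← mul_assoc, h2, e2, neg_mul, neg_mul, neg_div_neg_eq,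
      mul_div_mul_right _ _ (zpow_ne_zero _ h5)]
  rw [bil, tsum_int_split (bil_summable hq0 (by linarith) b)]
  simp only [h1, h3, hn, neg_div, tsum_neg]
  rw [ser, ser]
  simp
  ring

/-! ### Removable singularities and Liouville's theorem -/

/-- `f` has a removable singularity at `z₀`. -/
def Rem (f : ℂ → ℂ) (z₀ : ℂ) : Prop := ∃ g : ℂ → ℂ, AnalyticAt ℂ g z₀ ∧ f =ᶠ[𝓝[≠] z₀] g

namespace Rem

variable {f g : ℂ → ℂ} {z₀ : ℂ}

theorem of_analyticAt (h : AnalyticAt ℂ f z₀) : Rem f z₀ := ⟨f, h, EventuallyEq.rfl⟩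

theorem add (hf : Rem f z₀) (hg : Rem g z₀) : Rem (fun z => f z + g z) z₀ := by
  obtain ⟨f', hf', hf⟩ := hf
  obtain ⟨g', hg', hg⟩ := hg
  exact ⟨_, hf'.fun_add hg', hf.add hg⟩

theorem sub (hf : Rem f z₀) (hg : Rem g z₀) : Rem (fun z => f z - g z) z₀ := by
  obtain ⟨f', hf', hf⟩ := hf
  obtain ⟨g', hg', hg⟩ := hg
  exact ⟨_, hf'.fun_sub hg', hf.sub hg⟩

theorem mul (hf : Rem f z₀) (hg : Rem g z₀) : Rem (fun z => f z * g z) z₀ := by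
  obtain ⟨f', hf', hf⟩ := hf
  obtain ⟨g', hg', hg⟩ := hg
  exact ⟨_, hf'.fun_mul hg', hf.mul hg⟩

theorem congr (hf : Rem f z₀) (h : g =ᶠ[𝓝[≠] z₀] f) : Rem g z₀ := by
  obtain ⟨f', hf', hf⟩ := hf
  exact ⟨f', hf', h.trans hf⟩

theorem div_of_ne (hf : AnalyticAt ℂ f z₀) (hg : AnalyticAt ℂ g z₀) (h0 : g z₀ ≠ 0) :
    Rem (fun z => f z / g z) z₀ := of_analyticAt (hf.fun_div hg h0)

/-- A simple zero of the denominator cancels against a zero of the numerator. -/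
theorem div (hf : AnalyticAt ℂ f z₀) (hg : AnalyticAt ℂ g z₀) (hf0 : f z₀ = 0) (hg0 : g z₀ = 0)
    (hd : deriv g z₀ ≠ 0) : Rem (fun z => f z / g z) z₀ := by
  obtain ⟨pf, hpf⟩ := hf
  obtain ⟨pg, hpg⟩ := hg
  refine ⟨fun z => dslope f z₀ z / dslope g z₀ z,
    AnalyticAt.fun_div ⟨_, hpf.has_fpower_series_dslope_fslope⟩
      ⟨_, hpg.has_fpower_series_dslope_fslope⟩ (by rwa [dslope_same]), ?_⟩
  filter_upwards [self_mem_nhdsWithin] with z hz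
  have hz' : z - z₀ ≠ 0 := sub_ne_zero.2 hz
  rw [dslope_of_ne _ hz, dslope_of_ne _ hz, slope_def_field, slope_def_field, hf0, hg0, sub_zero,
    sub_zero, div_div_div_cancel_right₀ hz']

theorem tendsto_mul {c : ℂ} (hc : c ≠ 0) (z₀ : ℂ) :
    Tendsto (fun z => c * z) (𝓝[≠] z₀) (𝓝[≠] (c * z₀)) := by
  refine tendsto_nhdsWithin_of_tendsto_nhds_of_eventually_within _ ?_ ?_
  · exact ((continuous_const_mul c).tendsto z₀).mono_left nhdsWithin_le_nhds
  · filter_upwards [self_mem_nhdsWithin] with z hz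
    simpa [hc] using hz

theorem comp_mul {c : ℂ} (hc : c ≠ 0) (h : Rem f (c * z₀)) : Rem (fun z => f (c * z)) z₀ := by
  obtain ⟨g, hg, hfg⟩ := h
  refine ⟨fun z => g (c * z), ?_, (tendsto_mul hc z₀).eventually hfg⟩
  exact AnalyticAt.fun_comp hg (by fun_prop)

end Rem

/-- A property of points of `ℂˣ` that is invariant under `z ↦ p z` is invariant under all of
`p ^ ℤ`. -/
theorem zpow_transfer {p : ℂ} (hp : p ≠ 0) {P : ℂ → Prop}
    (h : ∀ z, z ≠ 0 → (P (p * z) ↔ P z)) (n : ℤ) {z : ℂ} (hz : z ≠ 0) : P (p ^ n * z) ↔ P z := by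
  induction n using Int.induction_on with
  | zero => simp
  | succ n ih =>
    rw [← ih, zpow_add_one₀ hp, mul_comm (p ^ (n : ℤ)) p, mul_assoc,
      h _ (mul_ne_zero (zpow_ne_zero _ hp) hz)]
  | pred n ih =>
    rw [← ih, ← h _ (mul_ne_zero (zpow_ne_zero _ hp) hz), ← mul_assoc, zpow_sub_one₀ hp]
    congr! 2
    field_simp

theorem eq_at_of_eventuallyEq {f g : ℂ → ℂ} {z : ℂ} (hf : ContinuousAt f z) (hg : ContinuousAt g z)
    (h : f =ᶠ[𝓝[≠] z] g) : f z = g z :=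
  tendsto_nhds_unique (hf.tendsto.mono_left nhdsWithin_le_nhds)
    ((hg.tendsto.mono_left nhdsWithin_le_nhds).congr' h.symm)

/-- A `p`-periodic function on `ℂˣ` with only removable singularities is constant: pulled back
along `exp` it becomes a bounded entire function. -/
theorem liouville {p : ℂ} (hp : p ≠ 0) (hp1 : ‖p‖ < 1) {f : ℂ → ℂ}
    (hper : ∀ z, z ≠ 0 → f (p * z) = f z) (hrem : ∀ z, z ≠ 0 → Rem f z) :
    ∃ K, ∀ z, z ≠ 0 → f =ᶠ[𝓝[≠] z] fun _ => K := by
  choose! g hg hfg using hrem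
  set F : ℂ → ℂ := fun z => g z z with hF
  have hloc : ∀ z₀, z₀ ≠ 0 → F =ᶠ[𝓝 z₀] g z₀ := by
    intro z₀ hz₀
    have h1 : ∀ᶠ z in 𝓝[≠] z₀, F z = g z₀ z := by
      have h2 := eventually_eventually_nhdsWithin.2 (hfg z₀ hz₀)
      have h3 : ∀ᶠ z in 𝓝[≠] z₀, AnalyticAt ℂ (g z₀) z :=
        ((hg z₀ hz₀).eventually_analyticAt).filter_mono nhdsWithin_le_nhds
      have h4 : ∀ᶠ z in 𝓝[≠] z₀, z ≠ 0 :=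
        (isOpen_ne.mem_nhds hz₀ : {z : ℂ | z ≠ 0} ∈ 𝓝 z₀) |> mem_nhdsWithin_of_mem_nhds
      filter_upwards [h2, h3, h4, self_mem_nhdsWithin] with z hz hza hz0 hne
      refine eq_at_of_eventuallyEq (f := g z) (hg z hz0).continuousAt hza.continuousAt ?_
      have h6 : 𝓝[{z₀}ᶜ] z = 𝓝 z := isOpen_compl_singleton.nhdsWithin_eq hne
      rw [h6] at hz
      exact (hfg z hz0).symm.trans (hz.filter_mono nhdsWithin_le_nhds)
    rw [EventuallyEq, ← nhdsNE_sup_pure z₀, eventually_sup]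
    exact ⟨h1, rfl⟩
  have hFa : ∀ z, z ≠ 0 → AnalyticAt ℂ F z := fun z hz => (hg z hz).congr (hloc z hz).symm
  have hfF : ∀ z, z ≠ 0 → f =ᶠ[𝓝[≠] z] F := fun z hz =>
    (hfg z hz).trans ((hloc z hz).symm.filter_mono nhdsWithin_le_nhds)
  have hFper : ∀ z, z ≠ 0 → F (p * z) = F z := by
    intro z hz
    have hpz := mul_ne_zero hp hz
    have h1 := (Rem.tendsto_mul hp z).eventually (hfF _ hpz)
    have h4 : ∀ᶠ z in 𝓝[≠] z, z ≠ 0 :=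
      mem_nhdsWithin_of_mem_nhds (isOpen_ne.mem_nhds hz : {z : ℂ | z ≠ 0} ∈ 𝓝 z)
    refine eq_at_of_eventuallyEq (f := fun z => F (p * z))
      (ContinuousAt.comp' (hFa _ hpz).continuousAt (by fun_prop)) (hFa z hz).continuousAt ?_
    filter_upwards [h1, hfF z hz, h4] with w h1 h2 h3
    rw [← h1, ← h2, hper w h3]
  have hp0 := norm_pos_iff.2 hp
  -- boundedness on a compact fundamental annulus
  obtain ⟨C, hC⟩ : ∃ C, ∀ z, z ≠ 0 → ‖F z‖ ≤ C := by
    have hK : IsCompact (Metric.closedBall (0 : ℂ) 1 \ Metric.ball 0 ‖p‖) :=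
      (isCompact_closedBall 0 1).diff Metric.isOpen_ball
    have hcont : ContinuousOn F (Metric.closedBall (0 : ℂ) 1 \ Metric.ball 0 ‖p‖) := by
      intro z hz
      refine (hFa z ?_).continuousAt.continuousWithinAt
      rintro rfl
      exact hz.2 (by simpa using hp)
    obtain ⟨C, hC⟩ := hK.exists_bound_of_continuousOn hcont
    refine ⟨C, fun z hz => ?_⟩
    obtain ⟨n, hn⟩ := exists_mem_Ioc_zpow (norm_pos_iff.2 hz) ((one_lt_inv₀ hp0).2 hp1)
    have hz' : ‖F (p ^ (n + 1) * z)‖ ≤ C ↔ ‖F z‖ ≤ C :=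
      zpow_transfer hp (P := fun z => ‖F z‖ ≤ C) (fun z hz => by rw [hFper z hz]) _ hz
    rw [← hz']
    refine hC _ ⟨?_, ?_⟩
    · rw [mem_closedBall_zero_iff, norm_mul, norm_zpow]
      have h := hn.2
      rw [inv_zpow] at h
      calc _ ≤ ‖p‖ ^ (n + 1) * (‖p‖ ^ (n + 1))⁻¹ := by gcongr
        _ = 1 := mul_inv_cancel₀ (zpow_ne_zero _ hp0.ne')
    · rw [mem_ball_zero_iff, not_lt, norm_mul, norm_zpow]
      have h := hn.1.le
      rw [inv_zpow] at h
      calc ‖p‖ = ‖p‖ ^ (n + 1) * (‖p‖ ^ n)⁻¹ := by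
            rw [zpow_add_one₀ hp0.ne']
            have : ‖p‖ ^ n ≠ 0 := zpow_ne_zero _ hp0.ne'
            field_simp
        _ ≤ _ := by gcongr
  have hd : Differentiable ℂ fun t => F (Complex.exp t) := fun t =>
    DifferentiableAt.fun_comp' t (hFa _ (Complex.exp_ne_zero t)).differentiableAt (by fun_prop)
  have hb : Bornology.IsBounded (Set.range fun t => F (Complex.exp t)) := by
    rw [isBounded_iff_forall_norm_le]
    refine ⟨C, ?_⟩
    rintro _ ⟨t, rfl⟩
    exact hC _ (Complex.exp_ne_zero t)
  refine ⟨F 1, fun z hz => ?_⟩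
  have h4 : ∀ᶠ w in 𝓝[≠] z, w ≠ 0 :=
    mem_nhdsWithin_of_mem_nhds (isOpen_ne.mem_nhds hz : {z : ℂ | z ≠ 0} ∈ 𝓝 z)
  filter_upwards [hfF z hz, h4] with w hw hw0
  have := hd.apply_eq_apply_of_bounded hb (Complex.log w) 0
  rw [hw]
  simpa [Complex.exp_log hw0] using this

/-! ### Theta functions -/

/-- The `q`-Pochhammer product `∏_{k ≥ 0} (1 - w p ^ k)`. -/
noncomputable def E (p w : ℂ) : ℂ := ∏' k : ℕ, (1 + -(w * p ^ k))

/-- The theta function `∏_{k ≥ 0} (1 - w p ^ k) (1 - p ^ (k + 1) / w)`. -/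
noncomputable def θ (p w : ℂ) : ℂ := E p w * E p (p / w)

/-- `θ p w / (1 - w)`, with its singularity at `w = 1` removed. -/
noncomputable def φ (p w : ℂ) : ℂ := E p (p * w) * E p (p / w)

section

variable {p : ℂ}

theorem E_summable (hp1 : ‖p‖ < 1) (w : ℂ) : Summable fun k : ℕ => ‖-(w * p ^ k)‖ := by
  simp only [norm_neg, norm_mul, norm_pow]
  exact (summable_geometric_of_lt_one (norm_nonneg _) hp1).mul_left _

theorem E_multipliable (hp1 : ‖p‖ < 1) (w : ℂ) : Multipliable fun k : ℕ => 1 + -(w * p ^ k) :=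
  multipliable_one_add_of_summable (E_summable hp1 w)

theorem E_differentiable (hp1 : ‖p‖ < 1) : Differentiable ℂ (E p) := by
  intro w
  have hu : Summable fun k : ℕ => (‖w‖ + 1) * ‖p‖ ^ k :=
    (summable_geometric_of_lt_one (norm_nonneg _) hp1).mul_left _
  have h := Summable.hasProdLocallyUniformlyOn_nat_one_add (K := Metric.ball 0 (‖w‖ + 1))
    (f := fun k w => -(w * p ^ k)) Metric.isOpen_ball hu
    (Eventually.of_forall fun n x hx => by
      rw [norm_neg, norm_mul, norm_pow]
      have : ‖x‖ < ‖w‖ + 1 := by simpa using hx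
      gcongr) (fun n => by fun_prop)
  have hd := h.differentiableOn (Eventually.of_forall fun s => by
    simp only [← Finset.prod_fn]
    fun_prop) Metric.isOpen_ball
  exact hd.differentiableAt (Metric.isOpen_ball.mem_nhds (by simp))

theorem E_eq (hp1 : ‖p‖ < 1) (w : ℂ) : E p w = (1 - w) * E p (p * w) := by
  have h := tprod_eq_zero_mul' (f := fun k : ℕ => 1 + -(w * p ^ k)) (by
    refine (E_multipliable hp1 (p * w)).congr fun k => ?_
    ring)
  rw [E, h, E]
  congr 1
  · simp; ring
  · exact tprod_congr fun k => by ring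

theorem E_ne_zero (hp1 : ‖p‖ < 1) {w : ℂ} (h : ∀ k : ℕ, w * p ^ k ≠ 1) : E p w ≠ 0 :=
  tprod_one_add_ne_zero_of_summable
    (fun k => by rw [← sub_eq_add_neg, sub_ne_zero]; exact (h k).symm) (E_summable hp1 w)

theorem E_p_ne_zero (hp1 : ‖p‖ < 1) : E p p ≠ 0 := by
  refine E_ne_zero hp1 fun k h => ?_
  have h1 : ‖p‖ ^ (k + 1) = 1 := by rw [← norm_pow, pow_succ', h, norm_one]
  have := pow_lt_one₀ (norm_nonneg p) hp1 (n := k + 1) (by omega)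
  linarith

theorem φ_one_ne_zero (hp1 : ‖p‖ < 1) : φ p 1 ≠ 0 := by
  rw [φ, mul_one, div_one]
  exact mul_ne_zero (E_p_ne_zero hp1) (E_p_ne_zero hp1)

theorem θ_eq (hp1 : ‖p‖ < 1) (w : ℂ) : θ p w = (1 - w) * φ p w := by
  rw [θ, φ, E_eq hp1 w, mul_assoc]

theorem θ_one (hp1 : ‖p‖ < 1) : θ p 1 = 0 := by simp [θ_eq hp1]

theorem φ_inv (w : ℂ) : φ p w⁻¹ = φ p w := by
  rw [φ, φ, div_inv_eq_mul, ← div_eq_mul_inv, mul_comm]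

theorem θ_analyticAt (hp1 : ‖p‖ < 1) {w : ℂ} (hw : w ≠ 0) : AnalyticAt ℂ (θ p) w := by
  have hE : ∀ w, AnalyticAt ℂ (E p) w := fun w => (E_differentiable hp1).analyticAt w
  refine (hE w).fun_mul ((hE _).fun_comp ?_)
  exact analyticAt_const.fun_div analyticAt_id hw

theorem φ_analyticAt (hp1 : ‖p‖ < 1) {w : ℂ} (hw : w ≠ 0) : AnalyticAt ℂ (φ p) w := by
  have hE : ∀ w, AnalyticAt ℂ (E p) w := fun w => (E_differentiable hp1).analyticAt w
  refine ((hE _).fun_comp ?_).fun_mul ((hE _).fun_comp ?_)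
  · fun_prop
  · exact analyticAt_const.fun_div analyticAt_id hw

theorem θ_div (hp : p ≠ 0) (w : ℂ) : θ p (p / w) = θ p w := by
  rw [θ, θ, div_div_cancel₀ hp, mul_comm]

theorem θ_inv (hp1 : ‖p‖ < 1) {w : ℂ} (hw : w ≠ 0) : θ p w⁻¹ = -θ p w / w := by
  rw [θ_eq hp1, θ_eq hp1, φ_inv]
  field_simp
  ring

theorem θ_mul (hp : p ≠ 0) (hp1 : ‖p‖ < 1) {w : ℂ} (hw : w ≠ 0) : θ p (p * w) = -θ p w / w := by
  rw [← θ_inv hp1 hw, ← θ_div hp (w⁻¹), div_inv_eq_mul]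

theorem θ_ne_zero (hp : p ≠ 0) (hp1 : ‖p‖ < 1) {w : ℂ} (hw : w ≠ 0) (h : ∀ n : ℤ, w ≠ p ^ n) :
    θ p w ≠ 0 := by
  refine mul_ne_zero (E_ne_zero hp1 fun k hk => h (-k) ?_) (E_ne_zero hp1 fun k hk => h (k + 1) ?_)
  · rw [zpow_neg, zpow_natCast]; exact eq_inv_of_mul_eq_one_left hk
  · rw [zpow_add_one₀ hp, zpow_natCast, mul_comm]
    field_simp at hk
    rw [← hk]

theorem θ_deriv_one (hp1 : ‖p‖ < 1) : deriv (θ p) 1 = -φ p 1 := by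
  have h : θ p = fun w => (1 - w) * φ p w := funext fun w => θ_eq hp1 w
  rw [h, deriv_fun_mul (by fun_prop) (φ_analyticAt hp1 one_ne_zero).differentiableAt]
  simp

theorem φ_deriv_one (hp1 : ‖p‖ < 1) : deriv (φ p) 1 = 0 := by
  have hd := (φ_analyticAt hp1 one_ne_zero).differentiableAt.hasDerivAt
  have h1 : HasDerivAt (fun w : ℂ => w⁻¹) (-1) 1 := by
    simpa using hasDerivAt_inv (one_ne_zero (α := ℂ))
  have h2 : HasDerivAt (fun w : ℂ => φ p w⁻¹) (deriv (φ p) 1 * -1) 1 :=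
    HasDerivAt.comp (h₂ := φ p) 1 (by simpa using hd) h1
  have h3 := h2.unique (by simpa only [φ_inv] using hd)
  linear_combination -(1 / 2 : ℂ) * h3

/-- `w θ'(w)`. -/
noncomputable def vt (p w : ℂ) : ℂ := w * deriv (θ p) w

theorem vt_analyticAt (hp1 : ‖p‖ < 1) {w : ℂ} (hw : w ≠ 0) : AnalyticAt ℂ (vt p) w :=
  analyticAt_id.fun_mul (θ_analyticAt hp1 hw).deriv

theorem vt_mul (hp : p ≠ 0) (hp1 : ‖p‖ < 1) {w : ℂ} (hw : w ≠ 0) :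
    vt p (p * w) = -(vt p w - θ p w) / w := by
  have h1 : HasDerivAt (fun w => θ p (p * w)) (deriv (θ p) (p * w) * p) w :=
    HasDerivAt.comp (h₂ := θ p) w
      (θ_analyticAt hp1 (mul_ne_zero hp hw)).differentiableAt.hasDerivAt
      (by simpa using (hasDerivAt_id w).const_mul p)
  have h2 : HasDerivAt (fun w => -θ p w / w) _ w :=
    (θ_analyticAt hp1 hw).differentiableAt.hasDerivAt.fun_neg.fun_div (hasDerivAt_id w) hw
  have h3 : (fun w => θ p (p * w)) =ᶠ[𝓝 w] fun w => -θ p w / w := by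
    filter_upwards [isOpen_ne.mem_nhds hw] with z hz using θ_mul hp hp1 hz
  have h4 := h1.unique (h2.congr_of_eventuallyEq h3)
  rw [vt, vt, mul_assoc, mul_left_comm, mul_comm p, h4]
  field_simp
  ring

theorem vt_inv (hp1 : ‖p‖ < 1) {w : ℂ} (hw : w ≠ 0) :
    vt p w⁻¹ = (vt p w - θ p w) / w := by
  have h1 : HasDerivAt (fun w => θ p w⁻¹) (deriv (θ p) w⁻¹ * (-(w ^ 2)⁻¹)) w :=
    HasDerivAt.comp (h₂ := θ p) w
      (θ_analyticAt hp1 (inv_ne_zero hw)).differentiableAt.hasDerivAt (hasDerivAt_inv hw)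
  have h2 : HasDerivAt (fun w => -θ p w / w) _ w :=
    (θ_analyticAt hp1 hw).differentiableAt.hasDerivAt.fun_neg.fun_div (hasDerivAt_id w) hw
  have h3 : (fun w => θ p w⁻¹) =ᶠ[𝓝 w] fun w => -θ p w / w := by
    filter_upwards [isOpen_ne.mem_nhds hw] with z hz using θ_inv hp1 hz
  have h4 := h1.unique (h2.congr_of_eventuallyEq h3)
  field_simp at h4
  rw [vt, vt]
  field_simp
  linear_combination -h4

theorem vt_one (hp1 : ‖p‖ < 1) : vt p 1 = -φ p 1 := by rw [vt, θ_deriv_one hp1, one_mul]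

end

/-! ### The quintuple product identity -/

section

variable {p : ℂ}

theorem T_inv (hp : p ≠ 0) (c : ℂ) : T p (c⁻¹ * p ^ (-3 : ℤ)) = T p c := by
  rw [T, T, ← (Equiv.neg ℤ).tsum_eq]
  refine tsum_congr fun n => ?_
  simp only [Equiv.neg_apply]
  rw [tri_neg, mul_sub, zpow_sub₀ hp, mul_zpow, inv_zpow, zpow_neg c, inv_inv, ← zpow_mul,
    zpow_neg (-1 : ℂ), ← inv_zpow]
  have : p ^ (-3 * -n : ℤ) = p ^ (3 * n : ℤ) := by congr 1; ring
  rw [this, inv_neg, inv_one]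
  have := zpow_ne_zero (3 * n) hp
  field_simp

theorem T_shift (hp : p ≠ 0) {c : ℂ} (hc : c ≠ 0) : T p (c * p ^ (-3 : ℤ)) = -c * T p c := by
  have e := (Equiv.addRight (1 : ℤ)).tsum_eq fun n : ℤ =>
    (-1) ^ n * p ^ (3 * tri n) * (c * p ^ (-3 : ℤ)) ^ n
  rw [T, T, ← tsum_mul_left, ← e]
  refine tsum_congr fun n => ?_
  simp only [Equiv.coe_addRight]
  rw [tri_succ, mul_zpow, ← zpow_mul, mul_add, zpow_add₀ hp, zpow_add_one₀ hc,
    zpow_add_one₀ (by norm_num)]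
  have : p ^ (-3 * (n + 1)) = (p ^ (3 * (n + 1)))⁻¹ := by rw [← zpow_neg]; congr 1; ring
  rw [this]
  have := zpow_ne_zero (3 * (n + 1)) hp
  field_simp

theorem T_analyticAt (hp : p ≠ 0) (hp1 : ‖p‖ < 1) {c : ℂ} (hc : c ≠ 0) : AnalyticAt ℂ (T p) c := by
  have hc0 := norm_pos_iff.2 hc
  set U := {x : ℂ | ‖c‖ / 2 < ‖x‖ ∧ ‖x‖ < 2 * ‖c‖} with hU
  have hUo : IsOpen U := (isOpen_lt continuous_const continuous_norm).inter
    (isOpen_lt continuous_norm continuous_const)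
  have hcU : c ∈ U := ⟨by linarith, by linarith⟩
  have hp0 := norm_pos_iff.2 hp
  have hs := (gauss_summable_real hp0 hp1 (c := 2 * ‖c‖) (by positivity)).add
    (gauss_summable_real hp0 hp1 (c := ‖c‖ / 2) (by positivity))
  have hd : DifferentiableOn ℂ (T p) U := by
    refine Complex.differentiableOn_tsum_of_summable_norm hs (fun n => ?_) hUo fun n x hx => ?_
    · intro x hx
      have hx0 : x ≠ 0 := by rintro rfl; have := hx.1; simp at this; linarith
      exact ((differentiableAt_zpow.2 (Or.inl hx0)).const_mul _).differentiableWithinAt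
    · rw [norm_mul, norm_mul, norm_zpow, norm_zpow, norm_zpow, norm_neg, norm_one, one_zpow,
        one_mul, ← mul_add]
      have hx0 : 0 < ‖x‖ := by have := hx.1; linarith
      gcongr
      rcases le_or_gt 0 n with hn | hn
      · have h1 : ‖x‖ ^ n ≤ (2 * ‖c‖) ^ n := zpow_le_zpow_left₀ hn hx0.le hx.2.le
        have h2 : 0 < (‖c‖ / 2) ^ n := by positivity
        linarith
      · have h1 : ‖x‖ ^ n ≤ (‖c‖ / 2) ^ n := by
          have h := zpow_le_zpow_left₀ (n := -n) (by omega) (by positivity) hx.1.le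
          rw [zpow_neg, zpow_neg] at h
          exact (inv_le_inv₀ (by positivity) (by positivity)).1 h
        have h2 : 0 < (2 * ‖c‖) ^ n := by positivity
        linarith
  exact hd.analyticAt (hUo.mem_nhds hcU)

/-- `ε(p) = ∑ (-1) ^ n p ^ (n (3 n + 1) / 2)`. -/
noncomputable def eps (p : ℂ) : ℂ := T p p⁻¹

theorem T_neg_two (hp : p ≠ 0) : T p (p ^ (-2 : ℤ)) = eps p := by
  rw [eps, ← T_inv hp p⁻¹, inv_inv, ← zpow_one_add₀ hp]; norm_num

/-- The sum side `∑ (-1) ^ n p ^ (n (3 n - 1) / 2) z ^ (3 n) (1 + z p ^ n)` of the quintuple product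
identity. -/
noncomputable def Q (p z : ℂ) : ℂ := T p (z ^ 3 * p ^ (-2 : ℤ)) + z * T p (z ^ 3 * p ^ (-1 : ℤ))

theorem Q_mul (hp : p ≠ 0) {z : ℂ} (hz : z ≠ 0) : Q p (p * z) = -Q p z / (p * z ^ 3) := by
  have h1 := T_shift hp (c := z ^ 3 * p) (mul_ne_zero (pow_ne_zero _ hz) hp)
  have h2 := T_shift hp (c := z ^ 3 * p ^ 2) (mul_ne_zero (pow_ne_zero _ hz) (pow_ne_zero _ hp))
  have e1 : z ^ 3 * p * p ^ (-3 : ℤ) = z ^ 3 * p ^ (-2 : ℤ) := by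
    rw [mul_assoc, ← zpow_one_add₀ hp]; norm_num
  have e2 : z ^ 3 * p ^ 2 * p ^ (-3 : ℤ) = z ^ 3 * p ^ (-1 : ℤ) := by
    simp only [zpow_neg, zpow_ofNat]; field_simp
  have e3 : (p * z) ^ 3 * p ^ (-2 : ℤ) = z ^ 3 * p := by
    rw [zpow_neg, zpow_ofNat]; field_simp
  have e4 : (p * z) ^ 3 * p ^ (-1 : ℤ) = z ^ 3 * p ^ 2 := by
    rw [zpow_neg, zpow_one]; field_simp
  rw [Q, Q, e3, e4, ← e1, ← e2, h1, h2]
  field_simp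
  ring

theorem Q_inv (hp : p ≠ 0) {z : ℂ} (hz : z ≠ 0) : Q p z⁻¹ = Q p z / z := by
  have h1 := T_inv hp (z ^ 3 * p ^ (-1 : ℤ))
  have h2 := T_inv hp (z ^ 3 * p ^ (-2 : ℤ))
  have e1 : (z ^ 3 * p ^ (-1 : ℤ))⁻¹ * p ^ (-3 : ℤ) = z⁻¹ ^ 3 * p ^ (-2 : ℤ) := by
    simp only [zpow_neg, zpow_ofNat]; field_simp
  have e2 : (z ^ 3 * p ^ (-2 : ℤ))⁻¹ * p ^ (-3 : ℤ) = z⁻¹ ^ 3 * p ^ (-1 : ℤ) := by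
    simp only [zpow_neg, zpow_ofNat]; field_simp
  rw [Q, Q, ← e1, ← e2, h1, h2]
  field_simp
  ring

theorem Q_neg_one (hp : p ≠ 0) : Q p (-1) = 0 := by
  have h := Q_inv hp (z := -1) (by norm_num)
  rw [inv_neg, inv_one] at h
  linear_combination (1 / 2 : ℂ) * h

theorem Q_sqrt (hp : p ≠ 0) {s : ℂ} (hs : s ^ 2 = p) : Q p s = 0 := by
  have hs0 : s ≠ 0 := by rintro rfl; exact hp (by rw [← hs]; norm_num)
  have h1 := Q_mul hp (inv_ne_zero hs0)
  rw [Q_inv hp hs0, show p * s⁻¹ = s by rw [← hs]; field_simp] at h1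
  have h2 : -(Q p s / s) / (p * s⁻¹ ^ 3) = -Q p s := by
    rw [← hs]; field_simp
  rw [h2] at h1
  linear_combination (1 / 2 : ℂ) * h1

theorem Q_one (hp : p ≠ 0) : Q p 1 = 2 * eps p := by
  rw [Q, one_pow, one_mul, one_mul, one_mul, T_neg_two hp, zpow_neg_one, ← eps]; ring

theorem Q_analyticAt (hp : p ≠ 0) (hp1 : ‖p‖ < 1) {z : ℂ} (hz : z ≠ 0) : AnalyticAt ℂ (Q p) z := by
  have h : ∀ k : ℤ, AnalyticAt ℂ (fun z => T p (z ^ 3 * p ^ k)) z := fun k =>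
    AnalyticAt.fun_comp (T_analyticAt hp hp1 (mul_ne_zero (pow_ne_zero _ hz) (zpow_ne_zero _ hp)))
      (by fun_prop)
  exact (h _).fun_add (analyticAt_id.fun_mul (h _))

theorem θ_zpow (hp : p ≠ 0) (hp1 : ‖p‖ < 1) (n : ℤ) : θ p (p ^ n) = 0 := by
  have h := zpow_transfer hp (P := fun z => θ p z = 0)
    (fun z hz => by rw [θ_mul hp hp1 hz]; simp [hz]) n one_ne_zero
  rw [mul_one] at h
  exact h.2 (θ_one hp1)

theorem rem_transfer {f : ℂ → ℂ} (hp : p ≠ 0) (hper : ∀ z, z ≠ 0 → f (p * z) = f z) {z : ℂ}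
    (hz : z ≠ 0) : Rem f (p * z) ↔ Rem f z := by
  have h0 : ∀ z₀ : ℂ, z₀ ≠ 0 → ∀ᶠ z in 𝓝[≠] z₀, z ≠ 0 := fun z₀ h =>
    mem_nhdsWithin_of_mem_nhds (isOpen_ne.mem_nhds h : {z : ℂ | z ≠ 0} ∈ 𝓝 z₀)
  constructor
  · intro h
    refine (h.comp_mul hp).congr ?_
    filter_upwards [h0 z hz] with w hw using (hper w hw).symm
  · intro h
    have h1 : Rem (fun w => f (p⁻¹ * w)) (p * z) :=
      Rem.comp_mul (inv_ne_zero hp) (by rwa [inv_mul_cancel_left₀ hp])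
    refine h1.congr ?_
    filter_upwards [h0 _ (mul_ne_zero hp hz)] with w hw
    rw [← hper _ (mul_ne_zero (inv_ne_zero hp) hw), mul_inv_cancel_left₀ hp]

theorem deriv_θ_p (hp : p ≠ 0) (hp1 : ‖p‖ < 1) : deriv (θ p) p ≠ 0 := by
  have h := vt_mul hp hp1 one_ne_zero
  rw [mul_one, vt_one hp1, θ_one hp1, vt] at h
  intro h0
  rw [h0] at h
  exact φ_one_ne_zero hp1 (by simpa using h.symm)

/-- Watson's quintuple product identity, in the form that is used below. -/
theorem quintuple (hp : p ≠ 0) (hp1 : ‖p‖ < 1) {z : ℂ} (hz : z ≠ 0) :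
    Q p z * θ p z = eps p * θ p (z ^ 2) := by
  have hsq : ∀ z : ℂ, z ≠ 0 → θ p ((p * z) ^ 2) = θ p (z ^ 2) / (p * z ^ 4) := by
    intro z hz
    rw [show (p * z) ^ 2 = p * (p * z ^ 2) by ring, θ_mul hp hp1 (by positivity),
      θ_mul hp hp1 (by positivity)]
    field_simp
  have hN : ∀ z : ℂ, z ≠ 0 → Q p (p * z) * θ p (p * z) = Q p z * θ p z / (p * z ^ 4) := by
    intro z hz
    rw [Q_mul hp hz, θ_mul hp hp1 hz]
    field_simp
  have hper : ∀ z : ℂ, z ≠ 0 → Q p (p * z) * θ p (p * z) / θ p ((p * z) ^ 2) =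
      Q p z * θ p z / θ p (z ^ 2) := by
    intro z hz
    rw [hN z hz, hsq z hz, div_div_div_cancel_right₀ (by positivity)]
  -- every zero of `θ (z ^ 2)` is a translate of a square root of `1` or `p`
  have hzero : ∀ z : ℂ, z ≠ 0 → θ p (z ^ 2) = 0 → ∃ (j : ℤ) (s : ℂ), s ≠ 0 ∧ z = p ^ j * s ∧
      (s = 1 ∨ s = -1 ∨ s ^ 2 = p) := by
    intro z hz h0
    by_contra! hcon
    refine θ_ne_zero hp hp1 (pow_ne_zero 2 hz) (fun n hn => ?_) h0
    have key : ∀ j : ℤ, (p ^ (-j) * z) ≠ 0 ∧ z = p ^ j * (p ^ (-j) * z) := fun j =>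
      ⟨mul_ne_zero (zpow_ne_zero _ hp) hz, by
        rw [← mul_assoc, ← zpow_add₀ hp, add_neg_cancel, zpow_zero, one_mul]⟩
    have hsq' : ∀ j : ℤ, (p ^ (-j) * z) ^ 2 = p ^ (n - 2 * j) := fun j => by
      rw [mul_pow, hn, ← zpow_natCast, ← zpow_mul, ← zpow_add₀ hp]; congr 1; push_cast; ring
    rcases Int.even_or_odd' n with ⟨j, rfl | rfl⟩
    · obtain ⟨h1, h2, -⟩ := hcon j _ (key j).1 (key j).2
      have h3 := hsq' j
      rw [sub_self, zpow_zero, sq_eq_one_iff] at h3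
      exact h3.elim h1 h2
    · obtain ⟨-, -, h1⟩ := hcon j _ (key j).1 (key j).2
      have h3 := hsq' j
      rw [add_sub_cancel_left, zpow_one] at h3
      exact h1 h3
  have hNs : ∀ s : ℂ, (s = 1 ∨ s = -1 ∨ s ^ 2 = p) → Q p s * θ p s = 0 := by
    rintro s (rfl | rfl | hs)
    · rw [θ_one hp1, mul_zero]
    · rw [Q_neg_one hp, zero_mul]
    · rw [Q_sqrt hp hs, zero_mul]
  have hNa : ∀ z, z ≠ 0 → AnalyticAt ℂ (fun z => Q p z * θ p z) z := fun z hz =>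
    (Q_analyticAt hp hp1 hz).fun_mul (θ_analyticAt hp1 hz)
  have hDa : ∀ z : ℂ, z ≠ 0 → AnalyticAt ℂ (fun z => θ p (z ^ 2)) z := fun z hz =>
    AnalyticAt.fun_comp (θ_analyticAt hp1 (pow_ne_zero 2 hz)) (by fun_prop)
  obtain ⟨K, hK⟩ := liouville hp hp1 hper (by
    intro z hz
    by_cases h0 : θ p (z ^ 2) = 0
    · obtain ⟨j, s, hs, rfl, h⟩ := hzero z hz h0
      refine (zpow_transfer hp (P := Rem fun z => Q p z * θ p z / θ p (z ^ 2))
        (fun z hz => rem_transfer (f := fun z => Q p z * θ p z / θ p (z ^ 2)) hp hper hz) j hs).2 ?_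
      have hs2 : s ^ 2 = 1 ∨ s ^ 2 = p := by
        rcases h with rfl | rfl | h
        · left; norm_num
        · left; norm_num
        · exact Or.inr h
      refine Rem.div (hNa s hs) (hDa s hs) (hNs s h) ?_ ?_
      · rcases hs2 with h | h
        · rw [h, θ_one hp1]
        · rw [h]; simpa using θ_zpow hp hp1 1
      · have hd : HasDerivAt (fun z => θ p (z ^ 2)) (deriv (θ p) (s ^ 2) * (2 * s)) s :=
          HasDerivAt.comp (h₂ := θ p) s
            (θ_analyticAt hp1 (pow_ne_zero 2 hs)).differentiableAt.hasDerivAt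
            (by simpa using hasDerivAt_pow 2 s)
        rw [hd.deriv]
        refine mul_ne_zero ?_ (mul_ne_zero two_ne_zero hs)
        rcases hs2 with h | h
        · rw [h, θ_deriv_one hp1]; exact neg_ne_zero.2 (φ_one_ne_zero hp1)
        · rw [h]; exact deriv_θ_p hp hp1
    · exact Rem.div_of_ne (hNa z hz) (hDa z hz) h0)
  have hall : ∀ z : ℂ, z ≠ 0 → Q p z * θ p z = K * θ p (z ^ 2) := by
    intro z hz
    by_cases h0 : θ p (z ^ 2) = 0
    · obtain ⟨j, s, hs, rfl, h⟩ := hzero z hz h0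
      rw [h0, mul_zero]
      exact (zpow_transfer hp (P := fun z => Q p z * θ p z = 0)
        (fun z hz => by rw [hN z hz, div_eq_zero_iff]; simp [hp, hz]) j hs).2 (hNs s h)
    · have := eq_at_of_eventuallyEq (((hNa z hz).fun_div (hDa z hz) h0).continuousAt)
        continuousAt_const (hK z hz)
      rwa [div_eq_iff h0] at this
  -- the constant is found by comparing leading terms at `z = 1`
  have h1 : Q p 1 * φ p 1 = K * (1 + 1) * φ p (1 ^ 2) := by
    refine eq_at_of_eventuallyEq (f := fun z => Q p z * φ p z)
      (g := fun z => K * (1 + z) * φ p (z ^ 2)) ?_ ?_ ?_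
    · exact ((Q_analyticAt hp hp1 one_ne_zero).fun_mul
        (φ_analyticAt hp1 one_ne_zero)).continuousAt
    · have : AnalyticAt ℂ (fun z => φ p (z ^ 2)) 1 :=
        AnalyticAt.fun_comp (φ_analyticAt hp1 (by norm_num)) (by fun_prop)
      exact ContinuousAt.mul (by fun_prop) this.continuousAt
    · have h4 : ∀ᶠ w in 𝓝[≠] (1 : ℂ), w ≠ 0 :=
        mem_nhdsWithin_of_mem_nhds (isOpen_ne.mem_nhds one_ne_zero)
      filter_upwards [h4, self_mem_nhdsWithin] with z hz hz1
      have h := hall z hz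
      rw [θ_eq hp1, θ_eq hp1] at h
      have hz' : 1 - z ≠ 0 := sub_ne_zero.2 (Ne.symm hz1)
      refine mul_left_cancel₀ hz' ?_
      linear_combination h
  rw [Q_one hp, one_pow] at h1
  have hK' : K = eps p := by
    have := mul_right_cancel₀ (φ_one_ne_zero hp1) h1
    linear_combination -(1 / 2 : ℂ) * this
  rw [hall z hz, hK']

end

/-! ### Appell–Lerch sums -/

/-- The terms of the Appell–Lerch sum `∑ (-1) ^ n p ^ (3 n (n + 1) / 2) c ^ n / (1 - w p ^ n)`. At a
pole the division by `0` drops the singular term. -/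
noncomputable def appTerm (p c w : ℂ) (n : ℤ) : ℂ :=
  (-1) ^ n * p ^ (3 * tri n) * c ^ n / (1 - w * p ^ n)

/-- The Appell–Lerch sum `∑ (-1) ^ n p ^ (3 n (n + 1) / 2) c ^ n / (1 - w p ^ n)` of level three. -/
noncomputable def A (p c w : ℂ) : ℂ := ∑' n : ℤ, appTerm p c w n

open Classical in
/-- The Appell–Lerch sum without the term that is singular at `w₀`. -/
noncomputable def Areg (p c w₀ w : ℂ) : ℂ :=
  ∑' n : ℤ, if p ^ (-n) = w₀ then 0 else appTerm p c w n

section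

variable {p : ℂ}

theorem zpow_inj (hp : p ≠ 0) (hp1 : ‖p‖ < 1) {m n : ℤ} (h : p ^ m = p ^ n) : m = n := by
  by_contra hne
  refine zpow_ne_one hp1 (sub_ne_zero.2 hne) ?_
  rw [zpow_sub₀ hp, h, div_self (zpow_ne_zero _ hp)]

theorem one_sub_eq_zero_iff (hp : p ≠ 0) (w : ℂ) (n : ℤ) : 1 - w * p ^ n = 0 ↔ p ^ (-n) = w := by
  have := zpow_ne_zero n hp
  rw [sub_eq_zero, zpow_neg, inv_eq_iff_eq_inv, eq_comm, eq_comm (a := p ^ n)]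
  constructor
  · intro h; exact (eq_inv_of_mul_eq_one_right h).symm
  · rintro h; rw [← h, mul_inv_cancel₀]; rintro rfl; simp at h; exact this h.symm

theorem Areg_aux (hp : p ≠ 0) (hp1 : ‖p‖ < 1) {c w₀ : ℂ} (hc : c ≠ 0) (hw₀ : w₀ ≠ 0) :
    ∃ δ > 0, ∃ u : ℤ → ℝ, Summable u ∧ ∀ w ∈ Metric.ball w₀ δ, ∀ n : ℤ, p ^ (-n) ≠ w₀ →
      1 - w * p ^ n ≠ 0 ∧ ‖appTerm p c w n‖ ≤ u n := by
  obtain ⟨δ, hδ, h⟩ := exists_sep hp hp1 hw₀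
  refine ⟨δ, hδ, _, (gauss_summable hp hp1 (mul_ne_zero hc (inv_ne_zero hp))).mul_left δ⁻¹,
    fun w hw n hn => ⟨fun h0 => ?_, ?_⟩⟩
  · have h1 := h w hw n hn
    rw [(one_sub_eq_zero_iff hp w n).1 h0, sub_self, norm_zero] at h1
    linarith
  · have h1 := sep_bound hp hδ (h w hw n hn)
    rw [appTerm, div_eq_mul_inv, norm_mul, mul_zpow, ← mul_assoc, norm_mul _ (p⁻¹ ^ n)]
    calc _ ≤ ‖(-1) ^ n * p ^ (3 * tri n) * c ^ n‖ * (δ⁻¹ * ‖p⁻¹ ^ n‖) := by gcongr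
      _ = _ := by ring

theorem Areg_analyticAt (hp : p ≠ 0) (hp1 : ‖p‖ < 1) {c w₀ : ℂ} (hc : c ≠ 0) (hw₀ : w₀ ≠ 0) :
    AnalyticAt ℂ (Areg p c w₀) w₀ := by
  obtain ⟨δ, hδ, u, hu, h⟩ := Areg_aux hp hp1 hc hw₀
  have hd : DifferentiableOn ℂ (Areg p c w₀) (Metric.ball w₀ δ) := by
    refine Complex.differentiableOn_tsum_of_summable_norm (u := fun n => |u n|) hu.abs (fun n => ?_)
      Metric.isOpen_ball fun n w hw => ?_
    · by_cases hn : p ^ (-n) = w₀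
      · simp only [if_pos hn]; fun_prop
      · simp only [if_neg hn]
        intro w hw
        have h0 := (h w hw n hn).1
        have hd : DifferentiableAt ℂ (fun w => 1 - w * p ^ n) w := by fun_prop
        exact ((differentiableAt_const _).fun_div hd h0).differentiableWithinAt
    · by_cases hn : p ^ (-n) = w₀
      · simp only [if_pos hn, norm_zero]; exact abs_nonneg _
      · simp only [if_neg hn]
        exact ((h w hw n hn).2).trans (le_abs_self _)
  exact hd.analyticAt (Metric.isOpen_ball.mem_nhds (Metric.mem_ball_self hδ))

theorem appTerm_eq_zero (hp : p ≠ 0) (c : ℂ) {w : ℂ} {n : ℤ} (h : p ^ (-n) = w) :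
    appTerm p c w n = 0 := by
  rw [appTerm, (one_sub_eq_zero_iff hp w n).2 h, div_zero]

theorem appTerm_summable (hp : p ≠ 0) (hp1 : ‖p‖ < 1) {c w : ℂ} (hc : c ≠ 0) (hw : w ≠ 0) :
    Summable (appTerm p c w) := by
  obtain ⟨δ, hδ, u, hu, h⟩ := Areg_aux hp hp1 hc hw
  refine Summable.of_norm_bounded hu.abs fun n => ?_
  by_cases hn : p ^ (-n) = w
  · rw [appTerm_eq_zero hp c hn, norm_zero]; exact abs_nonneg _
  · exact ((h w (Metric.mem_ball_self hδ) n hn).2).trans (le_abs_self _)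

theorem A_eq_Areg_self (hp : p ≠ 0) (c w : ℂ) : A p c w = Areg p c w w := by
  refine tsum_congr fun n => ?_
  split_ifs with h
  · exact appTerm_eq_zero hp c h
  · rfl

theorem A_eq_Areg (c w : ℂ) {w₀ : ℂ} (h : ∀ n : ℤ, p ^ (-n) ≠ w₀) : A p c w = Areg p c w₀ w :=
  tsum_congr fun n => by rw [if_neg (h n)]

theorem A_eq_Areg_add (hp : p ≠ 0) (hp1 : ‖p‖ < 1) {c w : ℂ} (hc : c ≠ 0) (hw : w ≠ 0) (n : ℤ) :
    A p c w = Areg p c (p ^ (-n)) w + appTerm p c w n := by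
  rw [A, (appTerm_summable hp hp1 hc hw).tsum_eq_add_tsum_ite n, add_comm, Areg]
  congr 1
  refine tsum_congr fun k => ?_
  by_cases h : k = n
  · rw [if_pos h, if_pos (by rw [h])]
  · rw [if_neg h, if_neg fun h' => h (neg_injective (zpow_inj hp hp1 h'))]

theorem A_analyticAt (hp : p ≠ 0) (hp1 : ‖p‖ < 1) {c w : ℂ} (hc : c ≠ 0) (hw : w ≠ 0)
    (h : ∀ n : ℤ, p ^ (-n) ≠ w) : AnalyticAt ℂ (A p c) w :=
  (Areg_analyticAt hp hp1 hc hw).congr (Eventually.of_forall fun z => (A_eq_Areg c z h).symm)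

theorem A_eq_Areg_one (hp : p ≠ 0) (hp1 : ‖p‖ < 1) {c w : ℂ} (hc : c ≠ 0) (hw : w ≠ 0) :
    A p c w = Areg p c 1 w + 1 / (1 - w) := by
  have := A_eq_Areg_add hp hp1 hc hw 0
  simpa [appTerm, tri] using this

theorem θ_simple_zero (hp : p ≠ 0) (hp1 : ‖p‖ < 1) (c : ℂ) (n : ℤ) :
    Rem (fun w => appTerm p c w n * θ p w) (p ^ (-n)) := by
  have h0 : p ^ (-n) ≠ 0 := zpow_ne_zero _ hp
  have h := Rem.div (f := fun w => (-1) ^ n * p ^ (3 * tri n) * c ^ n * θ p w)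
    (g := fun w => 1 - w * p ^ n) (z₀ := p ^ (-n))
    (analyticAt_const.fun_mul (θ_analyticAt hp1 h0)) (by fun_prop)
    (by rw [θ_zpow hp hp1, mul_zero]) ((one_sub_eq_zero_iff hp _ n).2 rfl) ?_
  · refine h.congr (Eventually.of_forall fun w => ?_)
    simp only [appTerm]
    rw [div_mul_eq_mul_div]
  · have hd : HasDerivAt (fun w : ℂ => 1 - w * p ^ n) (-(p ^ n)) (p ^ (-n)) := by
      simpa using ((hasDerivAt_id (p ^ (-n))).mul_const (p ^ n)).const_sub 1
    rw [hd.deriv]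
    exact neg_ne_zero.2 (zpow_ne_zero _ hp)

/-- The theta function cancels the poles of the Appell–Lerch sum. -/
theorem Aθ_rem (hp : p ≠ 0) (hp1 : ‖p‖ < 1) {c w : ℂ} (hc : c ≠ 0) (hw : w ≠ 0) :
    Rem (fun w => A p c w * θ p w) w := by
  have hreg : Rem (fun z => Areg p c w z * θ p z) w := Rem.of_analyticAt
    ((Areg_analyticAt hp hp1 hc hw).fun_mul (θ_analyticAt hp1 hw))
  by_cases h : ∃ n : ℤ, p ^ (-n) = w
  · obtain ⟨n, rfl⟩ := h
    refine (hreg.add (θ_simple_zero hp hp1 c n)).congr ?_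
    filter_upwards [mem_nhdsWithin_of_mem_nhds (isOpen_ne.mem_nhds hw)] with z hz
    rw [A_eq_Areg_add hp hp1 hc hz n, add_mul]
  · push Not at h
    exact hreg.congr (Eventually.of_forall fun z => by simp only [A_eq_Areg c z h])

theorem A_mul_aux (hp : p ≠ 0) {c : ℂ} (hc : c ≠ 0) (w : ℂ) :
    A p c (p * w) = -c⁻¹ * A p (c * p ^ (-3 : ℤ)) w := by
  have e := (Equiv.addRight (1 : ℤ)).tsum_eq fun n : ℤ => appTerm p (c * p ^ (-3 : ℤ)) w n
  rw [A, A, ← e, ← tsum_mul_left]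
  refine tsum_congr fun n => ?_
  simp only [Equiv.coe_addRight, appTerm]
  rw [tri_succ, mul_zpow, ← zpow_mul, mul_add, zpow_add₀ hp, zpow_add_one₀ hc,
    zpow_add_one₀ (by norm_num), zpow_add_one₀ hp]
  have : p ^ (-3 * (n + 1)) = (p ^ (3 * (n + 1)))⁻¹ := by rw [← zpow_neg]; congr 1; ring
  rw [this, ← mul_div_assoc, show p * w * p ^ n = w * (p ^ n * p) by ring]
  congr 1
  have := zpow_ne_zero (3 * (n + 1)) hp
  field_simp

/-- The substitution `c ↦ c p⁻³` replaces each term by `p ^ (-3 n)` times itself, and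
`p ^ (-3 n) - w ^ 3` is divisible by `1 - w p ^ n`, with a cofactor whose three terms sum to theta
series. -/
theorem A_cube (hp : p ≠ 0) (hp1 : ‖p‖ < 1) {c w : ℂ} (hc : c ≠ 0) (hw : w ≠ 0)
    (h : ∀ n : ℤ, p ^ (-n) ≠ w) :
    A p (c * p ^ (-3 : ℤ)) w = w ^ 3 * A p c w + T p (c * p ^ (-3 : ℤ)) +
      w * T p (c * p ^ (-2 : ℤ)) + w ^ 2 * T p (c * p ^ (-1 : ℤ)) := by
  have hs : ∀ k : ℤ, Summable fun n : ℤ => (-1) ^ n * p ^ (3 * tri n) * (c * p ^ k) ^ n := fun k =>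
    (gauss_summable hp hp1 (mul_ne_zero hc (zpow_ne_zero k hp))).of_norm
  have hA := appTerm_summable hp hp1 hc hw
  rw [A, A, T, T, T, ← tsum_mul_left, ← tsum_mul_left, ← tsum_mul_left,
    ← (hA.mul_left _).tsum_add (hs _),
    ← ((hA.mul_left _).add (hs _)).tsum_add ((hs _).mul_left _),
    ← (((hA.mul_left _).add (hs _)).add ((hs _).mul_left _)).tsum_add ((hs _).mul_left _)]
  refine tsum_congr fun n => ?_
  have h0 : 1 - w * p ^ n ≠ 0 := fun h0 => h n ((one_sub_eq_zero_iff hp w n).1 h0)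
  have hx : p ^ n ≠ 0 := zpow_ne_zero n hp
  have e : ∀ k : ℕ, (p ^ (-(k : ℤ))) ^ n = ((p ^ n) ^ k)⁻¹ := fun k => by
    rw [← zpow_natCast (p ^ n), ← zpow_mul, ← zpow_mul, ← zpow_neg]; congr 1; ring
  have e1 := e 1
  have e2 := e 2
  have e3 := e 3
  push_cast at e1 e2 e3
  simp only [appTerm, mul_zpow c]
  rw [e1, e2, e3]
  generalize p ^ n = x at h0 hx
  rw [mul_comm w x] at h0 ⊢
  field_simp
  ring

/-- The functional equation of the Appell–Lerch sum under `w ↦ p w`. Its inhomogeneous part is a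
polynomial in `w` with theta series as coefficients. -/
theorem A_mul (hp : p ≠ 0) (hp1 : ‖p‖ < 1) {c w : ℂ} (hc : c ≠ 0) (hw : w ≠ 0)
    (h : ∀ n : ℤ, p ^ (-n) ≠ w) :
    A p c (p * w) = -c⁻¹ * (w ^ 3 * A p c w + T p (c * p ^ (-3 : ℤ)) +
      w * T p (c * p ^ (-2 : ℤ)) + w ^ 2 * T p (c * p ^ (-1 : ℤ))) := by
  rw [A_mul_aux hp hc, A_cube hp hp1 hc hw h]

theorem A_inv (hp : p ≠ 0) (c : ℂ) (w : ℂ) (hw : w ≠ 0) :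
    A p c w⁻¹ = -w * A p (c⁻¹ * p ^ (-2 : ℤ)) w := by
  rw [A, A, ← tsum_mul_left, ← (Equiv.neg ℤ).tsum_eq]
  refine tsum_congr fun n => ?_
  have hx : p ^ n ≠ 0 := zpow_ne_zero n hp
  simp only [Equiv.neg_apply, appTerm]
  have e1 : (-1 : ℂ) ^ (-n) = (-1) ^ n := by rw [zpow_neg, ← inv_zpow, inv_neg, inv_one]
  have e2 : p ^ (3 * tri (-n)) = p ^ (3 * tri n) * ((p ^ n) ^ 3)⁻¹ := by
    rw [tri_neg, mul_sub, zpow_sub₀ hp, div_eq_mul_inv, mul_comm (3 : ℤ) n, zpow_mul p n 3,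
      zpow_ofNat]
  have e3 : (p ^ (-2 : ℤ)) ^ n = ((p ^ n) ^ 2)⁻¹ := by
    rw [← zpow_mul, mul_comm, zpow_mul, zpow_neg, zpow_ofNat]
  have e4 : 1 - w⁻¹ * p ^ (-n) = -(1 - w * p ^ n) / (w * p ^ n) := by
    rw [zpow_neg]; field_simp; ring
  rw [e1, e2, mul_zpow, e3, e4, zpow_neg c, inv_zpow, div_div_eq_mul_div, div_neg]
  rw [← mul_div_assoc, ← neg_div]
  congr 1
  field_simp

end

/-! ### The addition formula -/

section

variable {p : ℂ}

theorem ne_zpow_of_θ (hp : p ≠ 0) (hp1 : ‖p‖ < 1) {w : ℂ} (h : θ p w ≠ 0) (n : ℤ) : p ^ (-n) ≠ w := by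
  rintro rfl
  exact h (θ_zpow hp hp1 _)

theorem eventually_ne_zero {z₀ : ℂ} (h : z₀ ≠ 0) : ∀ᶠ z in 𝓝[≠] z₀, z ≠ 0 :=
  mem_nhdsWithin_of_mem_nhds (isOpen_ne.mem_nhds h : {z : ℂ | z ≠ 0} ∈ 𝓝 z₀)

/-- The combination `ζ³ A(ζ³, ζ² u) + A(ζ⁻³, u) - ζ (θ(ζ²) / θ(ζ)) A(1, ζ u)` of Appell–Lerch sums
for which the inhomogeneous terms of the functional equations cancel. -/
noncomputable def F (p ζ u : ℂ) : ℂ :=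
  ζ ^ 3 * A p (ζ ^ 3) (ζ ^ 2 * u) + A p (ζ ^ 3)⁻¹ u -
    ζ * (θ p (ζ ^ 2) / θ p ζ) * A p 1 (ζ * u)

variable {ζ : ℂ}

/-- `F` is quasi-periodic: in the functional equations of its three Appell–Lerch sums the theta series
cancel, by the quintuple product identity. -/
theorem F_mul (hp : p ≠ 0) (hp1 : ‖p‖ < 1) (hζ : ζ ≠ 0) (h1 : θ p ζ ≠ 0) {u : ℂ} (hu : u ≠ 0)
    (hu0 : θ p u ≠ 0) (hu1 : θ p (ζ * u) ≠ 0) (hu2 : θ p (ζ ^ 2 * u) ≠ 0) :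
    F p ζ (p * u) = -(ζ * u) ^ 3 * F p ζ u := by
  have hζ3 : ζ ^ 3 ≠ 0 := pow_ne_zero 3 hζ
  have e1 := A_mul hp hp1 hζ3 (mul_ne_zero (pow_ne_zero 2 hζ) hu) (ne_zpow_of_θ hp hp1 hu2)
  have e2 := A_mul hp hp1 (inv_ne_zero hζ3) hu (ne_zpow_of_θ hp hp1 hu0)
  have e3 := A_mul hp hp1 one_ne_zero (mul_ne_zero hζ hu) (ne_zpow_of_θ hp hp1 hu1)
  have t0 : T p ((ζ ^ 3)⁻¹ * p ^ (-3 : ℤ)) = -(ζ ^ 3)⁻¹ * T p (ζ ^ 3 * p ^ (-3 : ℤ)) := by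
    rw [T_inv hp, T_shift hp hζ3]; field_simp
  have t1 : T p ((ζ ^ 3)⁻¹ * p ^ (-2 : ℤ)) = T p (ζ ^ 3 * p ^ (-1 : ℤ)) := by
    rw [← T_inv hp (ζ ^ 3 * p ^ (-1 : ℤ))]
    congr 1
    simp only [zpow_neg, zpow_ofNat]; field_simp
  have t2 : T p ((ζ ^ 3)⁻¹ * p ^ (-1 : ℤ)) = T p (ζ ^ 3 * p ^ (-2 : ℤ)) := by
    rw [← T_inv hp (ζ ^ 3 * p ^ (-2 : ℤ))]
    congr 1
    simp only [zpow_neg, zpow_ofNat]; field_simp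
  have t3 : T p (1 * p ^ (-3 : ℤ)) = 0 := by
    have h1 := T_inv hp 1
    have h2 := T_shift hp one_ne_zero
    rw [inv_one] at h1
    linear_combination (1 / 2 : ℂ) * h1 + (1 / 2 : ℂ) * h2
  have t4 : T p (1 * p ^ (-2 : ℤ)) = eps p := by rw [one_mul, T_neg_two hp]
  have t5 : T p (1 * p ^ (-1 : ℤ)) = eps p := by rw [one_mul, zpow_neg_one, eps]
  have hq := quintuple hp hp1 hζ
  rw [Q] at hq
  have hρ : θ p (ζ ^ 2) / θ p ζ * eps p =
      T p (ζ ^ 3 * p ^ (-2 : ℤ)) + ζ * T p (ζ ^ 3 * p ^ (-1 : ℤ)) := by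
    rw [div_mul_eq_mul_div, div_eq_iff h1, hq]; ring
  rw [F, F, mul_left_comm (ζ ^ 2) p u, mul_left_comm ζ p u, e1, e2, e3, t0, t1, t2, t3, t4, t5]
  generalize θ p (ζ ^ 2) / θ p ζ = ρ at *
  generalize T p (ζ ^ 3 * p ^ (-1 : ℤ)) = x1 at *
  generalize T p (ζ ^ 3 * p ^ (-2 : ℤ)) = x2 at *
  generalize T p (ζ ^ 3 * p ^ (-3 : ℤ)) = x3 at *
  generalize A p (ζ ^ 3) (ζ ^ 2 * u) = a1 at *
  generalize A p (ζ ^ 3)⁻¹ u = a2 at *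
  generalize A p 1 (ζ * u) = a3 at *
  field_simp
  linear_combination (ζ ^ 2 * u + ζ ^ 3 * u ^ 2) * hρ

/-- The theta product cancelling the poles of `F`. -/
noncomputable def W (p ζ u : ℂ) : ℂ := θ p u * θ p (ζ * u) * θ p (ζ ^ 2 * u)

theorem W_mul (hp : p ≠ 0) (hp1 : ‖p‖ < 1) (hζ : ζ ≠ 0) {u : ℂ} (hu : u ≠ 0) :
    W p ζ (p * u) = -W p ζ u / (ζ * u) ^ 3 := by
  rw [W, W, mul_left_comm (ζ ^ 2) p u, mul_left_comm ζ p u, θ_mul hp hp1 hu,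
    θ_mul hp hp1 (mul_ne_zero hζ hu), θ_mul hp hp1 (mul_ne_zero (pow_ne_zero 2 hζ) hu)]
  field_simp

theorem FW_mul (hp : p ≠ 0) (hp1 : ‖p‖ < 1) (hζ : ζ ≠ 0) (h1 : θ p ζ ≠ 0) {u : ℂ} (hu : u ≠ 0) :
    F p ζ (p * u) * W p ζ (p * u) = F p ζ u * W p ζ u := by
  rw [W_mul hp hp1 hζ hu]
  by_cases hW : W p ζ u = 0
  · simp [hW]
  · have h := hW
    simp only [W, mul_ne_zero_iff] at h
    rw [F_mul hp hp1 hζ h1 hu h.1.1 h.1.2 h.2]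
    field_simp

theorem FW_rem (hp : p ≠ 0) (hp1 : ‖p‖ < 1) (hζ : ζ ≠ 0) {u : ℂ} (hu : u ≠ 0) :
    Rem (fun u => F p ζ u * W p ζ u) u := by
  have hζ3 : ζ ^ 3 ≠ 0 := pow_ne_zero 3 hζ
  have hζ2 : ζ ^ 2 ≠ 0 := pow_ne_zero 2 hζ
  have t0 : Rem (θ p) u := .of_analyticAt (θ_analyticAt hp1 hu)
  have t1 : Rem (fun u => θ p (ζ * u)) u :=
    .comp_mul hζ (.of_analyticAt (θ_analyticAt hp1 (mul_ne_zero hζ hu)))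
  have t2 : Rem (fun u => θ p (ζ ^ 2 * u)) u :=
    .comp_mul hζ2 (.of_analyticAt (θ_analyticAt hp1 (mul_ne_zero hζ2 hu)))
  have a0 := Aθ_rem hp hp1 (inv_ne_zero hζ3) hu
  have a1 : Rem (fun u => A p 1 (ζ * u) * θ p (ζ * u)) u :=
    .comp_mul hζ (Aθ_rem hp hp1 one_ne_zero (mul_ne_zero hζ hu))
  have a2 : Rem (fun u => A p (ζ ^ 3) (ζ ^ 2 * u) * θ p (ζ ^ 2 * u)) u :=
    .comp_mul hζ2 (Aθ_rem hp hp1 hζ3 (mul_ne_zero hζ2 hu))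
  have c0 : Rem (fun _ => ζ ^ 3) u := .of_analyticAt analyticAt_const
  have c1 : Rem (fun _ => ζ * (θ p (ζ ^ 2) / θ p ζ)) u := .of_analyticAt analyticAt_const
  refine (((c0.mul (a2.mul (t0.mul t1))).add (a0.mul (t1.mul t2))).sub
    (c1.mul (a1.mul (t0.mul t2)))).congr (Eventually.of_forall fun u => ?_)
  simp only [F, W]
  ring

/-- The part of `F` that is regular at `u = 1`. -/
noncomputable def Freg (p ζ u : ℂ) : ℂ :=
  ζ ^ 3 * A p (ζ ^ 3) (ζ ^ 2 * u) + Areg p (ζ ^ 3)⁻¹ 1 u -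
    ζ * (θ p (ζ ^ 2) / θ p ζ) * A p 1 (ζ * u)

theorem analyticAt_comp_mul_one {f : ℂ → ℂ} {c : ℂ} (h : AnalyticAt ℂ f c) :
    AnalyticAt ℂ (fun u => f (c * u)) 1 := by
  have h : AnalyticAt ℂ f (c * 1) := by rwa [mul_one]
  exact h.comp (f := fun u => c * u) (by fun_prop)

theorem Freg_analyticAt (hp : p ≠ 0) (hp1 : ‖p‖ < 1) (hζ : ζ ≠ 0) (h1 : θ p ζ ≠ 0)
    (h2 : θ p (ζ ^ 2) ≠ 0) : AnalyticAt ℂ (Freg p ζ) 1 := by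
  have hζ3 : ζ ^ 3 ≠ 0 := pow_ne_zero 3 hζ
  have a0 := Areg_analyticAt hp hp1 (inv_ne_zero hζ3) one_ne_zero
  have a1 := analyticAt_comp_mul_one
    (A_analyticAt hp hp1 one_ne_zero hζ (ne_zpow_of_θ hp hp1 h1))
  have a2 := analyticAt_comp_mul_one
    (A_analyticAt hp hp1 hζ3 (pow_ne_zero 2 hζ) (ne_zpow_of_θ hp hp1 h2))
  exact ((analyticAt_const.mul a2).add a0).sub (analyticAt_const.mul a1)

/-- A function, analytic at `u = 1`, that agrees with `F * W` off `u = 1`. -/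
noncomputable def FWreg (p ζ u : ℂ) : ℂ :=
  φ p u * (1 + (1 - u) * Freg p ζ u) * (θ p (ζ * u) * θ p (ζ ^ 2 * u))

theorem FW_eq_FWreg (hp : p ≠ 0) (hp1 : ‖p‖ < 1) (hζ : ζ ≠ 0) {u : ℂ} (hu : u ≠ 0) (hu1 : u ≠ 1) :
    F p ζ u * W p ζ u = FWreg p ζ u := by
  have h : 1 - u ≠ 0 := sub_ne_zero.2 hu1.symm
  rw [F, A_eq_Areg_one hp hp1 (inv_ne_zero (pow_ne_zero 3 hζ)) hu, W, FWreg, Freg, θ_eq hp1 u]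
  generalize θ p (ζ ^ 2) / θ p ζ = ρ
  field_simp
  ring

theorem FWreg_eventually (hp : p ≠ 0) (hp1 : ‖p‖ < 1) (hζ : ζ ≠ 0) (h1 : θ p ζ ≠ 0)
    (h2 : θ p (ζ ^ 2) ≠ 0) :
    (∀ᶠ u in 𝓝 1, FWreg p ζ u = φ p 1 * θ p ζ * θ p (ζ ^ 2)) ∧
      ∀ z, z ≠ 0 → (fun u => F p ζ u * W p ζ u) =ᶠ[𝓝[≠] z]
        fun _ => φ p 1 * θ p ζ * θ p (ζ ^ 2) := by
  obtain ⟨K, hK⟩ := liouville hp hp1 (fun z hz => FW_mul hp hp1 hζ h1 hz)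
    (fun z hz => FW_rem hp hp1 hζ hz)
  have ha : AnalyticAt ℂ (FWreg p ζ) 1 := by
    have f := Freg_analyticAt hp hp1 hζ h1 h2
    have b1 := analyticAt_comp_mul_one (θ_analyticAt hp1 hζ)
    have b2 := analyticAt_comp_mul_one (θ_analyticAt hp1 (pow_ne_zero 2 hζ))
    exact ((φ_analyticAt hp1 one_ne_zero).mul (analyticAt_const.add
      ((analyticAt_const.sub analyticAt_id).mul f))).mul (b1.mul b2)
  have he : FWreg p ζ =ᶠ[𝓝[≠] 1] fun _ => K := by
    filter_upwards [hK 1 one_ne_zero, eventually_ne_zero one_ne_zero, self_mem_nhdsWithin]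
      with u h hu0 hu1
    rw [← FW_eq_FWreg hp hp1 hζ hu0 hu1, h]
  have h := eq_at_of_eventuallyEq ha.continuousAt continuousAt_const he
  have hK' : K = φ p 1 * θ p ζ * θ p (ζ ^ 2) := by
    rw [← h, FWreg]; simp; ring
  subst hK'
  refine ⟨?_, hK⟩
  have := (ha.frequently_eq_iff_eventually_eq analyticAt_const).1 he.frequently
  exact this

/-- The addition formula for Appell–Lerch sums. -/
theorem appell_add (hp : p ≠ 0) (hp1 : ‖p‖ < 1) (hζ : ζ ≠ 0) (h1 : θ p ζ ≠ 0)
    (h2 : θ p (ζ ^ 2) ≠ 0) {u : ℂ} (hu : u ≠ 0) (hu0 : θ p u ≠ 0) (hu1 : θ p (ζ * u) ≠ 0)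
    (hu2 : θ p (ζ ^ 2 * u) ≠ 0) : F p ζ u * W p ζ u = φ p 1 * θ p ζ * θ p (ζ ^ 2) := by
  have hζ3 : ζ ^ 3 ≠ 0 := pow_ne_zero 3 hζ
  have hζ2 : ζ ^ 2 ≠ 0 := pow_ne_zero 2 hζ
  have t0 := (θ_analyticAt hp1 hu).continuousAt
  have t1 : ContinuousAt (fun u => θ p (ζ * u)) u :=
    (θ_analyticAt hp1 (mul_ne_zero hζ hu)).continuousAt.comp (f := fun u => ζ * u) (by fun_prop)
  have t2 : ContinuousAt (fun u => θ p (ζ ^ 2 * u)) u :=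
    (θ_analyticAt hp1 (mul_ne_zero hζ2 hu)).continuousAt.comp (f := fun u => ζ ^ 2 * u) (by fun_prop)
  have a0 := (A_analyticAt hp hp1 (inv_ne_zero hζ3) hu (ne_zpow_of_θ hp hp1 hu0)).continuousAt
  have a1 : ContinuousAt (fun u => A p 1 (ζ * u)) u :=
    (A_analyticAt hp hp1 one_ne_zero (mul_ne_zero hζ hu)
      (ne_zpow_of_θ hp hp1 hu1)).continuousAt.comp (f := fun u => ζ * u) (by fun_prop)
  have a2 : ContinuousAt (fun u => A p (ζ ^ 3) (ζ ^ 2 * u)) u :=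
    (A_analyticAt hp hp1 hζ3 (mul_ne_zero hζ2 hu)
      (ne_zpow_of_θ hp hp1 hu2)).continuousAt.comp (f := fun u => ζ ^ 2 * u) (by fun_prop)
  have hc : ContinuousAt (fun u => F p ζ u * W p ζ u) u :=
    (((a2.const_mul _).add a0).sub (a1.const_mul _)).mul ((t0.mul t1).mul t2)
  exact eq_at_of_eventuallyEq hc continuousAt_const ((FWreg_eventually hp hp1 hζ h1 h2).2 u hu)

/-- The logarithmic derivative of `θ` in the multiplicative sense. -/
noncomputable def L (p w : ℂ) : ℂ := vt p w / θ p w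

/-- The limiting case `u → 1` of the addition formula, read off from the derivative at `u = 1`. -/
theorem appell_add_one (hp : p ≠ 0) (hp1 : ‖p‖ < 1) (hζ : ζ ≠ 0) (h1 : θ p ζ ≠ 0)
    (h2 : θ p (ζ ^ 2) ≠ 0) : F p ζ 1 = L p ζ + L p (ζ ^ 2) := by
  have hF : F p ζ 1 = Freg p ζ 1 := by
    rw [F, Freg, A_eq_Areg_self hp (ζ ^ 3)⁻¹ 1]
  have hd : deriv (FWreg p ζ) 1 = 0 := by
    rw [Filter.EventuallyEq.deriv_eq (FWreg_eventually hp hp1 hζ h1 h2).1, deriv_const]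
  have f := (Freg_analyticAt hp hp1 hζ h1 h2).differentiableAt.hasDerivAt
  have g := (φ_analyticAt hp1 one_ne_zero).differentiableAt.hasDerivAt (𝕜 := ℂ)
  have b1 : HasDerivAt (fun u => θ p (ζ * u)) (ζ * deriv (θ p) ζ) 1 := by
    have h := (θ_analyticAt hp1 hζ).differentiableAt.hasDerivAt
    have h : HasDerivAt (θ p) (deriv (θ p) ζ) (ζ * 1) := by rwa [mul_one]
    have := h.comp (1 : ℂ) ((hasDerivAt_id (1 : ℂ)).const_mul ζ)
    rw [mul_one, mul_comm] at this
    exact this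
  have b2 : HasDerivAt (fun u => θ p (ζ ^ 2 * u)) (ζ ^ 2 * deriv (θ p) (ζ ^ 2)) 1 := by
    have h := (θ_analyticAt hp1 (pow_ne_zero 2 hζ)).differentiableAt.hasDerivAt
    have h : HasDerivAt (θ p) (deriv (θ p) (ζ ^ 2)) (ζ ^ 2 * 1) := by rwa [mul_one]
    have := h.comp (1 : ℂ) ((hasDerivAt_id (1 : ℂ)).const_mul (ζ ^ 2))
    rw [mul_one, mul_comm] at this
    exact this
  have e := (g.mul ((((hasDerivAt_id (1 : ℂ)).const_sub 1).mul f).const_add 1)).mul (b1.mul b2)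
  have e' := e.deriv
  change deriv (FWreg p ζ) 1 = _ at e'
  rw [hd, φ_deriv_one hp1] at e'
  simp at e'
  have hφ := φ_one_ne_zero hp1
  rw [hF, L, L, vt, vt]
  field_simp
  have e2 : φ p 1 * (-(Freg p ζ 1 * (θ p ζ * θ p (ζ ^ 2))) + (ζ * deriv (θ p) ζ * θ p (ζ ^ 2) +
      θ p ζ * (ζ ^ 2 * deriv (θ p) (ζ ^ 2)))) = 0 := by linear_combination -e'
  have := (mul_eq_zero.1 e2).resolve_left hφ
  linear_combination -this

end

/-! ### Logarithmic derivatives of theta functions -/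

section

variable {p : ℂ}

theorem L_inv (hp1 : ‖p‖ < 1) {w : ℂ} (hw : w ≠ 0) (h : θ p w ≠ 0) : L p w⁻¹ = 1 - L p w := by
  rw [L, L, vt_inv hp1 hw, θ_inv hp1 hw]
  field_simp
  ring

theorem L_mul (hp : p ≠ 0) (hp1 : ‖p‖ < 1) {w : ℂ} (hw : w ≠ 0) (h : θ p w ≠ 0) :
    L p (p * w) = L p w - 1 := by
  rw [L, L, vt_mul hp hp1 hw, θ_mul hp hp1 hw]
  field_simp

theorem L_div (hp : p ≠ 0) (hp1 : ‖p‖ < 1) {w : ℂ} (hw : w ≠ 0) (h : θ p w ≠ 0) :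
    L p (p / w) = -L p w := by
  have h' : θ p w⁻¹ ≠ 0 := by
    rw [θ_inv hp1 hw]; exact div_ne_zero (neg_ne_zero.2 h) hw
  rw [div_eq_mul_inv, L_mul hp hp1 (inv_ne_zero hw) h', L_inv hp1 hw h]
  ring

/-- The numerator of an elliptic function of `z`. The first summand is chosen so that the numerator
vanishes at the zeros of `denH`. -/
noncomputable def numH (p a z : ℂ) : ℂ :=
  φ p 1 * θ p (a ^ 2) * θ p (a * z) ^ 2 +
    θ p a ^ 2 * (vt p z * θ p (a ^ 2 * z) - θ p z * vt p (a ^ 2 * z))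

/-- The denominator of the elliptic function with numerator `numH`. -/
noncomputable def denH (p a z : ℂ) : ℂ := θ p z * θ p (a ^ 2 * z)

variable {a : ℂ}

theorem numH_mul (hp : p ≠ 0) (hp1 : ‖p‖ < 1) (ha : a ≠ 0) {z : ℂ} (hz : z ≠ 0) :
    numH p a (p * z) = numH p a z / (a * z) ^ 2 := by
  have ha2 : a ^ 2 ≠ 0 := pow_ne_zero 2 ha
  rw [numH, numH, mul_left_comm (a ^ 2) p z, mul_left_comm a p z, θ_mul hp hp1 hz,
    θ_mul hp hp1 (mul_ne_zero ha hz), θ_mul hp hp1 (mul_ne_zero ha2 hz), vt_mul hp hp1 hz,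
    vt_mul hp hp1 (mul_ne_zero ha2 hz)]
  field_simp
  ring

theorem denH_mul (hp : p ≠ 0) (hp1 : ‖p‖ < 1) (ha : a ≠ 0) {z : ℂ} (hz : z ≠ 0) :
    denH p a (p * z) = denH p a z / (a * z) ^ 2 := by
  have ha2 : a ^ 2 ≠ 0 := pow_ne_zero 2 ha
  rw [denH, denH, mul_left_comm (a ^ 2) p z, θ_mul hp hp1 hz, θ_mul hp hp1 (mul_ne_zero ha2 hz)]
  field_simp

theorem analyticAt_comp_mul {f : ℂ → ℂ} {c z : ℂ} (h : AnalyticAt ℂ f (c * z)) :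
    AnalyticAt ℂ (fun u => f (c * u)) z :=
  h.comp (f := fun u => c * u) (by fun_prop)

theorem numH_analyticAt (hp1 : ‖p‖ < 1) (ha : a ≠ 0) {z : ℂ} (hz : z ≠ 0) :
    AnalyticAt ℂ (numH p a) z := by
  have ha2 := mul_ne_zero (pow_ne_zero 2 ha) hz
  have t0 := θ_analyticAt hp1 hz
  have t1 := analyticAt_comp_mul (θ_analyticAt hp1 (mul_ne_zero ha hz))
  have t2 := analyticAt_comp_mul (θ_analyticAt hp1 ha2)
  have v0 := vt_analyticAt hp1 hz
  have v2 := analyticAt_comp_mul (vt_analyticAt hp1 ha2)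
  exact (analyticAt_const.mul (t1.pow 2)).add (analyticAt_const.mul ((v0.mul t2).sub (t0.mul v2)))

theorem denH_analyticAt (hp1 : ‖p‖ < 1) (ha : a ≠ 0) {z : ℂ} (hz : z ≠ 0) :
    AnalyticAt ℂ (denH p a) z :=
  (θ_analyticAt hp1 hz).mul
    (analyticAt_comp_mul (θ_analyticAt hp1 (mul_ne_zero (pow_ne_zero 2 ha) hz)))

theorem denH_deriv (hp1 : ‖p‖ < 1) (ha : a ≠ 0) {z : ℂ} (hz : z ≠ 0) :
    deriv (denH p a) z =
      deriv (θ p) z * θ p (a ^ 2 * z) + θ p z * (a ^ 2 * deriv (θ p) (a ^ 2 * z)) := by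
  have t0 := (θ_analyticAt hp1 hz).differentiableAt.hasDerivAt
  have t2 := (θ_analyticAt hp1 (mul_ne_zero (pow_ne_zero 2 ha) hz)).differentiableAt.hasDerivAt
  have := (t0.mul (t2.comp z ((hasDerivAt_id z).const_mul (a ^ 2)))).deriv
  rw [mul_one, mul_comm _ (a ^ 2)] at this
  exact this

theorem hH_rem (hp : p ≠ 0) (hp1 : ‖p‖ < 1) (ha : a ≠ 0) (h2 : θ p (a ^ 2) ≠ 0) {z : ℂ}
    (hz : z ≠ 0) : Rem (fun z => numH p a z / denH p a z) z := by
  have ha2 : a ^ 2 ≠ 0 := pow_ne_zero 2 ha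
  have hφ := φ_one_ne_zero hp1
  have hper : ∀ z, z ≠ 0 → numH p a (p * z) / denH p a (p * z) = numH p a z / denH p a z := by
    intro z hz
    rw [numH_mul hp hp1 ha hz, denH_mul hp hp1 ha hz]
    have : (a * z) ^ 2 ≠ 0 := pow_ne_zero 2 (mul_ne_zero ha hz)
    field_simp
  have trans : ∀ (n : ℤ) {w : ℂ}, w ≠ 0 → _ := fun n w hw =>
    (zpow_transfer hp (P := Rem fun z => numH p a z / denH p a z)
      (fun z hz => rem_transfer hp hper hz) n hw).2
  by_cases hD : denH p a z = 0
  · by_cases h0 : ∃ n : ℤ, z = p ^ n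
    · obtain ⟨n, rfl⟩ := h0
      rw [← mul_one (p ^ n)]
      refine trans n one_ne_zero (Rem.div (numH_analyticAt hp1 ha one_ne_zero)
        (denH_analyticAt hp1 ha one_ne_zero) ?_ ?_ ?_)
      · rw [numH, mul_one, mul_one, θ_one hp1, vt_one hp1]; ring
      · rw [denH, θ_one hp1, zero_mul]
      · rw [denH_deriv hp1 ha one_ne_zero, θ_one hp1, zero_mul, add_zero, mul_one, θ_deriv_one hp1]
        exact mul_ne_zero (neg_ne_zero.2 hφ) h2
    · push Not at h0
      have h1 : ∃ n : ℤ, a ^ 2 * z = p ^ n := by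
        by_contra hcon
        push Not at hcon
        exact mul_ne_zero (θ_ne_zero hp hp1 hz h0) (θ_ne_zero hp hp1 (mul_ne_zero ha2 hz) hcon) hD
      obtain ⟨n, hn⟩ := h1
      have hz' : z = p ^ n * (a ^ 2)⁻¹ := by rw [← hn]; field_simp
      rw [hz']
      have hi := inv_ne_zero ha2
      have ti : θ p (a ^ 2)⁻¹ ≠ 0 := by
        rw [θ_inv hp1 ha2]; exact div_ne_zero (neg_ne_zero.2 h2) ha2
      refine trans n hi (Rem.div (numH_analyticAt hp1 ha hi) (denH_analyticAt hp1 ha hi) ?_ ?_ ?_)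
      · have e : a * (a ^ 2)⁻¹ = a⁻¹ := by field_simp
        rw [numH, mul_inv_cancel₀ ha2, θ_one hp1, vt_one hp1, e, θ_inv hp1 ha, θ_inv hp1 ha2]
        field_simp
        ring
      · rw [denH, mul_inv_cancel₀ ha2, θ_one hp1, mul_zero]
      · rw [denH_deriv hp1 ha hi, mul_inv_cancel₀ ha2, θ_one hp1, mul_zero, zero_add, θ_deriv_one hp1]
        exact mul_ne_zero ti (mul_ne_zero ha2 (neg_ne_zero.2 hφ))
  · exact Rem.div_of_ne (numH_analyticAt hp1 ha hz) (denH_analyticAt hp1 ha hz) hD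

/-- A theta quotient as a combination of logarithmic derivatives. It compares the values at `a` and
at `a⁻¹` of an elliptic function without poles. -/
theorem theta_cube (hp : p ≠ 0) (hp1 : ‖p‖ < 1) (ha : a ≠ 0) (h1 : θ p a ≠ 0)
    (h2 : θ p (a ^ 2) ≠ 0) (h3 : θ p (a ^ 3) ≠ 0) :
    φ p 1 * θ p (a ^ 2) ^ 3 = θ p a ^ 3 * θ p (a ^ 3) * (1 + L p (a ^ 3) - 3 * L p a) := by
  have ha2 : a ^ 2 ≠ 0 := pow_ne_zero 2 ha
  have hφ := φ_one_ne_zero hp1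
  have hper : ∀ z, z ≠ 0 → numH p a (p * z) / denH p a (p * z) = numH p a z / denH p a z := by
    intro z hz
    rw [numH_mul hp hp1 ha hz, denH_mul hp hp1 ha hz]
    have : (a * z) ^ 2 ≠ 0 := pow_ne_zero 2 (mul_ne_zero ha hz)
    field_simp
  obtain ⟨K, hK⟩ := liouville hp hp1 hper fun z hz => hH_rem hp hp1 ha h2 hz
  have hval : ∀ z, z ≠ 0 → denH p a z ≠ 0 → numH p a z / denH p a z = K := fun z hz hD =>
    eq_at_of_eventuallyEq ((numH_analyticAt hp1 ha hz).continuousAt.div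
      (denH_analyticAt hp1 ha hz).continuousAt hD) continuousAt_const (hK z hz)
  have e1 : a ^ 2 * a = a ^ 3 := by ring
  have e2 : a ^ 2 * a⁻¹ = a := by field_simp
  have ti : θ p a⁻¹ ≠ 0 := by
    rw [θ_inv hp1 ha]; exact div_ne_zero (neg_ne_zero.2 h1) ha
  have v1 := hval a ha (by rw [denH, e1]; exact mul_ne_zero h1 h3)
  have v2 := hval a⁻¹ (inv_ne_zero ha) (by rw [denH, e2]; exact mul_ne_zero ti h1)
  rw [← v2, numH, denH, e1, numH, denH, e2, mul_inv_cancel₀ ha, θ_one hp1, vt_inv hp1 ha,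
    θ_inv hp1 ha, ← sq] at v1
  have k1 : vt p a = L p a * θ p a := by rw [L]; field_simp
  have k3 : vt p (a ^ 3) = L p (a ^ 3) * θ p (a ^ 3) := by rw [L]; field_simp
  rw [k1, k3] at v1
  field_simp at v1
  refine mul_left_cancel₀ h1 ?_
  linear_combination v1

end

/-! ### Dissection of series into residue classes modulo five -/

section

theorem tsum_five {f : ℤ → ℂ} (hf : Summable f) :
    ∑' n, f n = ∑' m, f (5 * m + 0) + ∑' m, f (5 * m + 1) + ∑' m, f (5 * m + 2) +
      ∑' m, f (5 * m + -1) + ∑' m, f (5 * m + -2) := by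
  have hs : ∀ r : ℤ, Summable fun m : ℤ => f (5 * m + r) := fun r =>
    hf.comp_injective fun a b h => by simpa using h
  have h1 : ∑' n, f n = ∑' m : ℤ, ∑ r : Fin 5, f (m * 5 + (r : ℤ)) := by
    rw [← (Int.divModEquiv 5).symm.tsum_eq]
    have hs' : Summable fun x : ℤ × Fin 5 => f ((Int.divModEquiv 5).symm x) :=
      (Int.divModEquiv 5).symm.summable_iff.2 hf
    rw [hs'.tsum_prod]
    refine tsum_congr fun m => ?_
    rw [tsum_fintype]
    rfl
  have h3 : ∑' m, f (5 * m + -2) = ∑' m, f (5 * m + 3) := by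
    rw [← (Equiv.addRight (1 : ℤ)).tsum_eq]
    refine tsum_congr fun m => ?_
    rw [Equiv.coe_addRight]; congr 1; ring
  have h4 : ∑' m, f (5 * m + -1) = ∑' m, f (5 * m + 4) := by
    rw [← (Equiv.addRight (1 : ℤ)).tsum_eq]
    refine tsum_congr fun m => ?_
    rw [Equiv.coe_addRight]; congr 1; ring
  rw [h1, h3, h4, ← (hs 0).tsum_add (hs 1), ← ((hs 0).add (hs 1)).tsum_add (hs 2),
    ← (((hs 0).add (hs 1)).add (hs 2)).tsum_add (hs 4),
    ← ((((hs 0).add (hs 1)).add (hs 2)).add (hs 4)).tsum_add (hs 3)]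
  refine tsum_congr fun m => ?_
  rw [Fin.sum_univ_five, mul_comm m 5]
  simp
  ring

theorem tri_five (m r : ℤ) : tri (5 * m + r) = 25 * tri m + (5 * r - 10) * m + tri r := by
  have h1 := two_mul_tri (5 * m + r)
  have h2 := two_mul_tri m
  have h3 := two_mul_tri r
  have : 2 * tri (5 * m + r) = 2 * (25 * tri m + (5 * r - 10) * m + tri r) := by
    linear_combination h1 - 25 * h2 - h3
  linarith

variable {q : ℂ}

theorem term_five (hq : q ≠ 0) (k m r : ℤ) :
    (-1) ^ (5 * m + r) * q ^ (3 * tri (5 * m + r)) * (q ^ k) ^ (5 * m + r) =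
      (-1) ^ r * q ^ (3 * tri r + k * r) *
        ((-1) ^ m * ((q ^ 5) ^ 5) ^ (3 * tri m) * ((q ^ 5) ^ (k + 3 * r - 6)) ^ m) := by
  have e1 : (-1 : ℂ) ^ (5 * m + r) = (-1) ^ r * (-1) ^ m := by
    rw [zpow_add₀ (by norm_num), zpow_mul, mul_comm]; norm_num
  have e2 : ((q ^ 5) ^ 5) ^ (3 * tri m) = q ^ (25 * (3 * tri m)) := by
    have : (q ^ 5) ^ 5 = q ^ (25 : ℤ) := by rw [← pow_mul]; norm_cast
    rw [this, ← zpow_mul]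
  have e3 : ((q ^ 5) ^ (k + 3 * r - 6)) ^ m = q ^ (5 * (k + 3 * r - 6) * m) := by
    rw [← zpow_mul, mul_assoc, zpow_mul q 5]; norm_cast
  rw [e1, e2, e3, ← zpow_mul, tri_five]
  have e4 : q ^ (3 * (25 * tri m + (5 * r - 10) * m + tri r)) * q ^ (k * (5 * m + r)) =
      q ^ (3 * tri r + k * r) * (q ^ (25 * (3 * tri m)) * q ^ (5 * (k + 3 * r - 6) * m)) := by
    rw [← zpow_add₀ hq, ← zpow_add₀ hq, ← zpow_add₀ hq]; congr 1; ring
  linear_combination (-1) ^ r * (-1) ^ m * e4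

theorem T_class (hq : q ≠ 0) (k r : ℤ) :
    ∑' m : ℤ, (-1) ^ (5 * m + r) * q ^ (3 * tri (5 * m + r)) * (q ^ k) ^ (5 * m + r) =
      (-1) ^ r * q ^ (3 * tri r + k * r) * T ((q ^ 5) ^ 5) ((q ^ 5) ^ (k + 3 * r - 6)) := by
  rw [T, ← tsum_mul_left]
  exact tsum_congr fun m => term_five hq k m r

theorem bil_class (hq : q ≠ 0) (k r : ℤ) :
    ∑' m : ℤ, (-1) ^ (5 * m + r) * q ^ (3 * tri (5 * m + r)) * (q ^ k) ^ (5 * m + r) /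
        (1 - (q ^ 5) ^ (5 * m + r)) =
      (-1) ^ r * q ^ (3 * tri r + k * r) *
        A ((q ^ 5) ^ 5) ((q ^ 5) ^ (k + 3 * r - 6)) ((q ^ 5) ^ r) := by
  rw [A, ← tsum_mul_left]
  refine tsum_congr fun m => ?_
  have e : (q ^ 5) ^ (5 * m + r) = (q ^ 5) ^ r * ((q ^ 5) ^ 5) ^ m := by
    rw [zpow_add₀ (pow_ne_zero 5 hq), mul_comm, zpow_mul]; norm_cast
  rw [term_five hq, appTerm, e, mul_div_assoc]

theorem tri_vals : tri 0 = 0 ∧ tri 1 = 1 ∧ tri 2 = 3 ∧ tri (-1) = 0 ∧ tri (-2) = 1 := by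
  decide

theorem T_dissect (hq : q ≠ 0) (hq1 : ‖q‖ < 1) (y : ℂ) (hy : y = q ^ 5) :
    T q q⁻¹ = T (y ^ 5) (y ^ (-7 : ℤ)) - q ^ 2 * T (y ^ 5) (y ^ (-4 : ℤ)) +
      q ^ 7 * T (y ^ 5) (y ^ (-1 : ℤ)) - q * T (y ^ 5) (y ^ (-10 : ℤ)) +
      q ^ 5 * T (y ^ 5) (y ^ (-13 : ℤ)) := by
  have hs := (gauss_summable hq hq1 (zpow_ne_zero (-1) hq)).of_norm
  have h := tsum_five hs
  obtain ⟨t0, t1, t2, t3, t4⟩ := tri_vals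
  simp only [T_class hq, t0, t1, t2, t3, t4, ← hy] at h
  rw [← zpow_neg_one, T, h]
  norm_num
  norm_cast

theorem bil_dissect (hq : q ≠ 0) (hq1 : ‖q‖ < 1) (b : ℤ) (y : ℂ) (hy : y = q ^ 5) :
    bil b q = A (y ^ 5) (y ^ (b - 7)) 1 - q ^ (b + 2) * A (y ^ 5) (y ^ (b - 4)) y +
      q ^ (2 * b + 7) * A (y ^ 5) (y ^ (b - 1)) (y ^ 2) -
      q ^ (1 - b) * A (y ^ 5) (y ^ (b - 10)) y⁻¹ +
      q ^ (5 - 2 * b) * A (y ^ 5) (y ^ (b - 13)) (y ^ 2)⁻¹ := by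
  have h := tsum_five (bil_summable hq hq1 b)
  obtain ⟨t0, t1, t2, t3, t4⟩ := tri_vals
  rw [bil_class hq (b - 1) 0, bil_class hq (b - 1) 1, bil_class hq (b - 1) 2,
    bil_class hq (b - 1) (-1), bil_class hq (b - 1) (-2), t0, t1, t2, t3, t4, ← hy] at h
  have e0 : b - 1 + 3 * 0 - 6 = b - 7 := by ring
  have e1 : b - 1 + 3 * 1 - 6 = b - 4 := by ring
  have e2 : b - 1 + 3 * 2 - 6 = b - 1 := by ring
  have e3 : b - 1 + 3 * (-1) - 6 = b - 10 := by ring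
  have e4 : b - 1 + 3 * (-2) - 6 = b - 13 := by ring
  have f0 : 3 * 0 + (b - 1) * 0 = 0 := by ring
  have f1 : 3 * 1 + (b - 1) * 1 = b + 2 := by ring
  have f2 : 3 * 3 + (b - 1) * 2 = 2 * b + 7 := by ring
  have f3 : 3 * 0 + (b - 1) * (-1) = 1 - b := by ring
  have f4 : 3 * 1 + (b - 1) * (-2) = 5 - 2 * b := by ring
  rw [e0, e1, e2, e3, e4, f0, f1, f2, f3, f4] at h
  have s1 : (-1 : ℂ) ^ (-1 : ℤ) = -1 := by norm_num
  have s2 : (-1 : ℂ) ^ (-2 : ℤ) = 1 := by norm_num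
  have s3 : (-1 : ℂ) ^ (2 : ℤ) = 1 := by norm_num
  rw [bil, ← hy, h, s1, s2, s3, zpow_neg y 1, zpow_neg y 2]
  simp only [zpow_ofNat, pow_zero, pow_one]
  ring

end

/-! ### Relations at powers of `y` -/

section

variable {y : ℂ}

theorem norm_pow_five (hy1 : ‖y‖ < 1) : ‖y ^ 5‖ < 1 := by
  rw [norm_pow]; exact pow_lt_one₀ (norm_nonneg _) hy1 (by norm_num)

theorem θ_pow_ne (hy : y ≠ 0) (hy1 : ‖y‖ < 1) {k : ℤ} (hk : ¬ (5 : ℤ) ∣ k) :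
    θ (y ^ 5) (y ^ k) ≠ 0 := by
  refine θ_ne_zero (pow_ne_zero 5 hy) (norm_pow_five hy1) (zpow_ne_zero _ hy) fun n h => ?_
  have h' : y ^ k = y ^ (5 * n) := by rw [h, zpow_mul]; norm_cast
  exact hk ⟨n, zpow_inj hy hy1 h'⟩

theorem θ1_ne (hy : y ≠ 0) (hy1 : ‖y‖ < 1) : θ (y ^ 5) y ≠ 0 := by
  simpa using θ_pow_ne hy hy1 (k := 1) (by norm_num)

theorem θ2_ne (hy : y ≠ 0) (hy1 : ‖y‖ < 1) : θ (y ^ 5) (y ^ 2) ≠ 0 :=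
  θ_pow_ne hy hy1 (k := 2) (by norm_num)

theorem θ3_eq (hy : y ≠ 0) : θ (y ^ 5) (y ^ 3) = θ (y ^ 5) (y ^ 2) := by
  rw [← θ_div (pow_ne_zero 5 hy) (y ^ 2)]
  congr 1; field_simp

theorem θ4_eq (hy : y ≠ 0) : θ (y ^ 5) (y ^ 4) = θ (y ^ 5) y := by
  rw [← θ_div (pow_ne_zero 5 hy) y]
  congr 1; field_simp

theorem L3_eq (hy : y ≠ 0) (hy1 : ‖y‖ < 1) : L (y ^ 5) (y ^ 3) = -L (y ^ 5) (y ^ 2) := by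
  rw [← L_div (pow_ne_zero 5 hy) (norm_pow_five hy1) (pow_ne_zero 2 hy) (θ2_ne hy hy1)]
  congr 1; field_simp

theorem L4_eq (hy : y ≠ 0) (hy1 : ‖y‖ < 1) : L (y ^ 5) (y ^ 4) = -L (y ^ 5) y := by
  rw [← L_div (pow_ne_zero 5 hy) (norm_pow_five hy1) hy (θ1_ne hy hy1)]
  congr 1; field_simp

/-- The quotient of theta values at `y ^ 2` and `y`, with nome `y ^ 5`; up to a power of `q` it is the
reciprocal of the Rogers–Ramanujan continued fraction. -/
noncomputable def qa (y : ℂ) : ℂ := θ (y ^ 5) (y ^ 2) / θ (y ^ 5) y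

theorem qa_ne (hy : y ≠ 0) (hy1 : ‖y‖ < 1) : qa y ≠ 0 := div_ne_zero (θ2_ne hy hy1) (θ1_ne hy hy1)

/-- The two logarithmic derivatives in terms of the theta quotients, first relation. -/
theorem logder_one (hy : y ≠ 0) (hy1 : ‖y‖ < 1) :
    1 - L (y ^ 5) (y ^ 2) - 3 * L (y ^ 5) y = φ (y ^ 5) 1 / θ (y ^ 5) y * qa y ^ 2 := by
  have h1 := θ1_ne hy hy1
  have h2 := θ2_ne hy hy1
  have h := theta_cube (pow_ne_zero 5 hy) (norm_pow_five hy1) hy h1 h2 (by rwa [θ3_eq hy])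
  rw [θ3_eq hy, L3_eq hy hy1] at h
  rw [qa]
  field_simp
  refine mul_left_cancel₀ h2 ?_
  linear_combination -h

/-- The two logarithmic derivatives in terms of the theta quotients, second relation. -/
theorem logder_two (hy : y ≠ 0) (hy1 : ‖y‖ < 1) :
    3 * L (y ^ 5) (y ^ 2) - L (y ^ 5) y = y * (φ (y ^ 5) 1 / θ (y ^ 5) y) / qa y ^ 3 := by
  have h1 := θ1_ne hy hy1
  have h2 := θ2_ne hy hy1
  have hp := pow_ne_zero 5 hy
  have hp1 := norm_pow_five hy1
  have e4 : (y ^ 2) ^ 2 = y ^ 4 := by ring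
  have e6 : (y ^ 2) ^ 3 = y ^ 5 * y := by ring
  have t6 : θ (y ^ 5) ((y ^ 2) ^ 3) = -θ (y ^ 5) y / y := by rw [e6, θ_mul hp hp1 hy]
  have h := theta_cube hp hp1 (pow_ne_zero 2 hy) h2 (by rwa [e4, θ4_eq hy])
    (by rw [t6]; exact div_ne_zero (neg_ne_zero.2 h1) hy)
  rw [t6, e6, L_mul hp hp1 hy h1, e4, θ4_eq hy] at h
  rw [qa]
  field_simp at h ⊢
  linear_combination -h

/-- `p`-shift of an Appell sum whose parameters are powers of `y`, where `p = y ^ 5`. -/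
theorem A_pow_mul (hy : y ≠ 0) (k : ℤ) {w w' : ℂ} (hw : w' = y ^ 5 * w) :
    A (y ^ 5) (y ^ k) w' = -(y ^ (-k)) * A (y ^ 5) (y ^ (k - 15)) w := by
  have e : y ^ k * (y ^ 5) ^ (-3 : ℤ) = y ^ (k - 15) := by
    rw [zpow_sub₀ hy, zpow_neg, div_eq_mul_inv]; norm_cast; rw [← pow_mul]
  rw [hw, A_mul_aux (pow_ne_zero 5 hy) (zpow_ne_zero k hy), e, zpow_neg]

theorem A_pow_inv (hy : y ≠ 0) (k : ℤ) {w : ℂ} (hw : w ≠ 0) :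
    A (y ^ 5) (y ^ k) w⁻¹ = -w * A (y ^ 5) (y ^ (-k - 10)) w := by
  have e : (y ^ k)⁻¹ * (y ^ 5) ^ (-2 : ℤ) = y ^ (-k - 10) := by
    rw [zpow_sub₀ hy, zpow_neg, zpow_neg, div_eq_mul_inv]; norm_cast; rw [← pow_mul]
  rw [A_inv (pow_ne_zero 5 hy) _ _ hw, e]

/-- The addition formula at `ζ = y`, `u → 1`. -/
theorem rel11 (hy : y ≠ 0) (hy1 : ‖y‖ < 1) :
    y ^ 3 * A (y ^ 5) (y ^ (3 : ℤ)) (y ^ 2) + A (y ^ 5) (y ^ (-3 : ℤ)) 1 -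
      y * qa y * A (y ^ 5) (y ^ (0 : ℤ)) y = L (y ^ 5) y + L (y ^ 5) (y ^ 2) := by
  have h := appell_add_one (pow_ne_zero 5 hy) (norm_pow_five hy1) hy (θ1_ne hy hy1) (θ2_ne hy hy1)
  rw [F, mul_one, mul_one] at h
  exact h

/-- The addition formula at `ζ = y ^ 2`, `u → 1`. -/
theorem rel22 (hy : y ≠ 0) (hy1 : ‖y‖ < 1) :
    -A (y ^ 5) (y ^ (-9 : ℤ)) y⁻¹ + A (y ^ 5) (y ^ (-6 : ℤ)) 1 -
      y ^ 2 / qa y * A (y ^ 5) (y ^ (0 : ℤ)) (y ^ 2) = L (y ^ 5) (y ^ 2) - L (y ^ 5) y := by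
  have e4 : (y ^ 2) ^ 2 = y ^ 4 := by ring
  have e6 : (y ^ 2) ^ 3 = y ^ (6 : ℤ) := by norm_cast; ring
  have h := appell_add_one (pow_ne_zero 5 hy) (norm_pow_five hy1) (pow_ne_zero 2 hy)
    (θ2_ne hy hy1) (by rw [e4, θ4_eq hy]; exact θ1_ne hy hy1)
  rw [F, mul_one, mul_one, e4, θ4_eq hy, L4_eq hy hy1, e6, ← zpow_neg, ← zpow_zero y,
    A_pow_mul hy 6 (w := y⁻¹) (by field_simp)] at h
  have h6 : y ^ (6 : ℤ) * y ^ (-6 : ℤ) = 1 := by rw [← zpow_add₀ hy]; norm_num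
  norm_num at h h6 ⊢
  rw [qa]
  field_simp at h h6 ⊢
  linear_combination h

/-- The addition formula at `ζ = u = y`. -/
theorem rel21 (hy : y ≠ 0) (hy1 : ‖y‖ < 1) :
    -A (y ^ 5) (y ^ (-12 : ℤ)) (y ^ 2)⁻¹ + A (y ^ 5) (y ^ (-3 : ℤ)) y -
      y * qa y * A (y ^ 5) (y ^ (0 : ℤ)) (y ^ 2) = φ (y ^ 5) 1 / θ (y ^ 5) (y ^ 2) := by
  have h1 := θ1_ne hy hy1
  have h2 := θ2_ne hy hy1
  have e2 : y * y = y ^ 2 := by ring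
  have e3 : y ^ 2 * y = y ^ 3 := by ring
  have h := appell_add (pow_ne_zero 5 hy) (norm_pow_five hy1) hy h1 h2 hy h1
    (by rwa [e2]) (by rwa [e3, θ3_eq hy])
  have hs := A_pow_mul hy 3 (w := (y ^ 2)⁻¹) (w' := y ^ 3) (by field_simp)
  rw [F, W, e2, e3, θ3_eq hy, ← qa] at h
  have e : F (y ^ 5) y y = φ (y ^ 5) 1 / θ (y ^ 5) (y ^ 2) := by
    rw [eq_div_iff h2]
    refine mul_left_cancel₀ (mul_ne_zero h1 h2) ?_
    rw [F, e2, e3, ← qa]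
    linear_combination h
  rw [← e, F, e2, e3, ← qa]
  change _ = y ^ 3 * A (y ^ 5) (y ^ (3 : ℤ)) (y ^ 3) + A (y ^ 5) (y ^ (-3 : ℤ)) y -
      y * qa y * A (y ^ 5) (y ^ (0 : ℤ)) (y ^ 2)
  have h3 : y ^ 3 * y ^ (-3 : ℤ) = 1 := by
    rw [← zpow_natCast, ← zpow_add₀ hy]; norm_num
  norm_num at hs h3 ⊢
  rw [hs]
  linear_combination A (y ^ 5) (y ^ 12)⁻¹ (y ^ 2)⁻¹ * h3

/-- The addition formula at `ζ = y ^ 2`, `u = y⁻¹`. -/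
theorem rel12 (hy : y ≠ 0) (hy1 : ‖y‖ < 1) :
    y * A (y ^ 5) (y ^ (-1 : ℤ)) (y ^ 2) - A (y ^ 5) (y ^ (-4 : ℤ)) y -
      y / qa y * A (y ^ 5) (y ^ (0 : ℤ)) y = -(φ (y ^ 5) 1 / θ (y ^ 5) y) := by
  have h1 := θ1_ne hy hy1
  have h2 := θ2_ne hy hy1
  have hp := pow_ne_zero 5 hy
  have hp1 := norm_pow_five hy1
  have e1 : y ^ 2 * y⁻¹ = y := by field_simp
  have e3 : y ^ 4 * y⁻¹ = y ^ 3 := by field_simp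
  have e4 : (y ^ 2) ^ 2 = y ^ 4 := by ring
  have e6 : (y ^ 2) ^ 3 = y ^ (6 : ℤ) := by norm_cast; ring
  have ti := θ_inv hp1 (p := y ^ 5) hy
  have h := appell_add hp hp1 (pow_ne_zero 2 hy) h2 (by rwa [e4, θ4_eq hy]) (inv_ne_zero hy)
    (by rw [ti]; exact div_ne_zero (neg_ne_zero.2 h1) hy) (by rwa [e1])
    (by rwa [e4, e3, θ3_eq hy])
  have hs := A_pow_mul hy 6 (w := (y ^ 2)⁻¹) (w' := y ^ 3) (by field_simp)
  have hi := A_pow_inv hy (-6) hy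
  have hi2 := A_pow_inv hy (-9) (pow_ne_zero 2 hy)
  norm_num at hs hi hi2
  have h6 : y ^ (6 : ℤ) * y ^ (-6 : ℤ) = 1 := by rw [← zpow_add₀ hy]; norm_num
  rw [F, W, e1, e4, e3, θ3_eq hy, θ4_eq hy, ti, e6, ← zpow_neg, ← zpow_zero y] at h
  norm_num at h h6 ⊢
  rw [hs, hi, hi2] at h
  rw [qa]
  field_simp at h h6 ⊢
  linear_combination -h

end

/-! ### Dissection of the pentagonal series and of the bilateral sums -/

section

variable {q y : ℂ}

/-- The `5`-dissection of Euler's pentagonal series. -/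
theorem T_eq_eps (hq : q ≠ 0) (hq1 : ‖q‖ < 1) (hyq : y = q ^ 5) (hy1 : ‖y‖ < 1) :
    T q q⁻¹ = eps (y ^ 5) * (qa y - q - q ^ 2 / qa y) := by
  have hy : y ≠ 0 := hyq ▸ pow_ne_zero 5 hq
  have hp := pow_ne_zero 5 hy
  have hp1 := norm_pow_five hy1
  have h1 := θ1_ne hy hy1
  have h2 := θ2_ne hy hy1
  have Q1 := quintuple hp hp1 hy
  have Q2 := quintuple hp hp1 (pow_ne_zero 2 hy)
  have e4 : (y ^ 2) ^ 2 = y ^ 4 := by ring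
  have a1 : y ^ 3 * (y ^ 5) ^ (-2 : ℤ) = y ^ (-7 : ℤ) := by
    simp only [zpow_neg, zpow_ofNat]; field_simp
  have a2 : y ^ 3 * (y ^ 5) ^ (-1 : ℤ) = y ^ (-2 : ℤ) := by
    simp only [zpow_neg, zpow_ofNat]; field_simp
  have a3 : (y ^ 2) ^ 3 * (y ^ 5) ^ (-2 : ℤ) = y ^ (-4 : ℤ) := by
    simp only [zpow_neg, zpow_ofNat]; field_simp
  have a4 : (y ^ 2) ^ 3 * (y ^ 5) ^ (-1 : ℤ) = y := by
    simp only [zpow_neg, zpow_ofNat]; field_simp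
  have b1 : T (y ^ 5) (y ^ (-13 : ℤ)) = T (y ^ 5) (y ^ (-2 : ℤ)) := by
    rw [← T_inv hp (y ^ (-2 : ℤ))]
    congr 1
    simp only [zpow_neg, zpow_ofNat]; field_simp
  have b2 : T (y ^ 5) (y ^ (-1 : ℤ)) = -y * T (y ^ 5) y := by
    rw [← T_shift hp hy, ← T_inv hp (y ^ (-1 : ℤ))]
    congr 1
    simp only [zpow_neg, zpow_ofNat]; field_simp
  have b3 : T (y ^ 5) (y ^ (-10 : ℤ)) = eps (y ^ 5) := by
    rw [← T_neg_two hp]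
    congr 1
    simp only [zpow_neg, zpow_ofNat]; field_simp
  rw [Q, a1, a2] at Q1
  rw [Q, a3, a4, e4, θ4_eq hy] at Q2
  rw [T_dissect hq hq1 y hyq, b1, b2, b3]
  have hq7 : q ^ 7 = q ^ 2 * y := by rw [hyq]; ring
  rw [hq7, ← hyq]
  have c1 : T (y ^ 5) (y ^ (-7 : ℤ)) + y * T (y ^ 5) (y ^ (-2 : ℤ)) = eps (y ^ 5) * qa y := by
    rw [qa, mul_div_assoc', eq_div_iff h1, Q1]
  have c2 : T (y ^ 5) (y ^ (-4 : ℤ)) + y ^ 2 * T (y ^ 5) y = eps (y ^ 5) / qa y := by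
    rw [qa, div_div_eq_mul_div, eq_div_iff h2, Q2]
  rw [mul_sub, mul_sub, mul_div_assoc', mul_comm _ (q ^ 2), mul_div_assoc]
  linear_combination c1 - q ^ 2 * c2

/-- The `5`-dissection of `bil 0`. Apart from a multiple of the pentagonal factor, only theta quotients
and logarithmic derivatives remain. -/
theorem bil_zero (hq : q ≠ 0) (hq1 : ‖q‖ < 1) (hyq : y = q ^ 5) (hy1 : ‖y‖ < 1) :
    bil 0 q = -y * A (y ^ 5) 1 y * (qa y - q - q ^ 2 / qa y) - (L (y ^ 5) y + L (y ^ 5) (y ^ 2)) -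
      q ^ 2 * (φ (y ^ 5) 1 / θ (y ^ 5) y) := by
  have hy : y ≠ 0 := hyq ▸ pow_ne_zero 5 hq
  have h := bil_dissect hq hq1 0 y hyq
  have h1 := A_pow_inv hy (-7) one_ne_zero
  have h2 := A_pow_inv hy (-13) (pow_ne_zero 2 hy)
  have h3 := A_pow_inv hy (-10) hy
  have r1 := rel11 hy hy1
  have r2 := rel12 hy hy1
  norm_num at h h1 h2 h3 r1 r2
  rw [h1, h2, h3] at h
  rw [h]
  have hq7' : q ^ 7 = q ^ 2 * y := by rw [hyq]; ring
  linear_combination -r1 + q ^ 2 * r2 + A (y ^ 5) y⁻¹ (y ^ 2) * hq7' + y ^ 2 * A (y ^ 5) (y ^ 3) (y ^ 2) * hyq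

/-- The `5`-dissection of `bil 1`. Apart from a multiple of the pentagonal factor, only theta quotients
and logarithmic derivatives remain. -/
theorem bil_one (hq : q ≠ 0) (hq1 : ‖q‖ < 1) (hyq : y = q ^ 5) (hy1 : ‖y‖ < 1) :
    bil 1 q = -y * q ^ 3 * A (y ^ 5) 1 (y ^ 2) * (qa y - q - q ^ 2 / qa y) +
      (L (y ^ 5) (y ^ 2) - L (y ^ 5) y) - q ^ 3 * (φ (y ^ 5) 1 / θ (y ^ 5) (y ^ 2)) := by
  have hy : y ≠ 0 := hyq ▸ pow_ne_zero 5 hq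
  have h := bil_dissect hq hq1 1 y hyq
  have r1 := rel22 hy hy1
  have r2 := rel21 hy hy1
  norm_num at h r1 r2
  rw [h]
  have hq9 : q ^ 9 = q ^ 4 * y := by rw [hyq]; ring
  linear_combination r1 - q ^ 3 * r2 + A (y ^ 5) 1 (y ^ 2) * hq9 + y / qa y * A (y ^ 5) 1 (y ^ 2) * hyq

end

/-! ### Exponents congruent to `4` modulo `5` -/

section

variable {q : ℂ}

theorem genP_dissect (hq : q ≠ 0) (hq1 : ‖q‖ < 1 / 2) (y : ℂ) (hyq : y = q ^ 5) (hy1 : ‖y‖ < 1) :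
    eps (y ^ 5) ≠ 0 ∧ qa y - q - q ^ 2 / qa y ≠ 0 ∧
      genP q = 1 / (eps (y ^ 5) * (qa y - q - q ^ 2 / qa y)) := by
  have h := genP_mul_T hq hq1
  rw [T_eq_eps hq (by linarith) hyq hy1] at h
  have h0 : eps (y ^ 5) * (qa y - q - q ^ 2 / qa y) ≠ 0 := by
    intro h0; rw [h0, mul_zero] at h; exact zero_ne_one h
  exact ⟨left_ne_zero_of_mul h0, right_ne_zero_of_mul h0, by rw [eq_div_iff h0, h]⟩

theorem norm_fifth {q y : ℂ} (hq1 : ‖q‖ < 1 / 2) (hyq : y = q ^ 5) : ‖y‖ < 1 := by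
  rw [hyq]; exact norm_pow_five (by linarith)

/-- Multiplied by the partition generating function, `1 + 5 * bil 1` has no exponents congruent
to `4` modulo `5`. -/
theorem one_dissect : ∃ X : Fin 4 → ℂ → ℂ, ∀ q : ℂ, q ≠ 0 → ‖q‖ < 1 / 2 →
    genP q * (1 + 5 * bil 1 q) = ∑ i : Fin 4, q ^ (i : ℕ) * X i (q ^ 5) := by
  refine ⟨![
    fun y => φ (y ^ 5) 1 / θ (y ^ 5) y / qa y * qa y ^ 2 / eps (y ^ 5),
    fun y => φ (y ^ 5) 1 / θ (y ^ 5) y / qa y * qa y / eps (y ^ 5),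
    fun y => φ (y ^ 5) 1 / θ (y ^ 5) y / qa y * 2 / eps (y ^ 5),
    fun y => (φ (y ^ 5) 1 / θ (y ^ 5) y / qa y * (-2 / qa y) - 5 * y * A (y ^ 5) 1 (y ^ 2)) /
      eps (y ^ 5)], fun q hq hq1 => ?_⟩
  obtain ⟨y, hyq⟩ : ∃ y, y = q ^ 5 := ⟨_, rfl⟩
  have hy1 := norm_fifth hq1 hyq
  have hy : y ≠ 0 := hyq ▸ pow_ne_zero 5 hq
  obtain ⟨hε, he, hP⟩ := genP_dissect hq hq1 y hyq hy1
  have l1 := logder_one hy hy1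
  have l2 := logder_two hy hy1
  have ha := qa_ne hy hy1
  have h1 := θ1_ne hy hy1
  have h2 := θ2_ne hy hy1
  have hh : φ (y ^ 5) 1 / θ (y ^ 5) (y ^ 2) = φ (y ^ 5) 1 / θ (y ^ 5) y / qa y := by
    rw [qa]; field_simp
  have key : 1 + 5 * bil 1 q = (qa y - q - q ^ 2 / qa y) *
      (φ (y ^ 5) 1 / θ (y ^ 5) y / qa y *
        (qa y ^ 2 + qa y * q + 2 * q ^ 2 - 2 * q ^ 3 / qa y) -
        5 * y * q ^ 3 * A (y ^ 5) 1 (y ^ 2)) := by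
    rw [bil_one hq (by linarith) hyq hy1, hh]
    have l3 : 1 + 5 * (L (y ^ 5) (y ^ 2) - L (y ^ 5) y) =
        φ (y ^ 5) 1 / θ (y ^ 5) y * qa y ^ 2 +
          2 * (y * (φ (y ^ 5) 1 / θ (y ^ 5) y) / qa y ^ 3) := by
      rw [← l1, ← l2]; ring
    generalize φ (y ^ 5) 1 / θ (y ^ 5) y = g at *
    generalize qa y = a at *
    have l4 : g * a ^ 2 + 2 * (y * g / a ^ 3) - 5 * q ^ 3 * (g / a) = (a - q - q ^ 2 / a) *
      (g / a * (a ^ 2 + a * q + 2 * q ^ 2 - 2 * q ^ 3 / a)) := by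
      rw [hyq]; field_simp; ring
    linear_combination l3 + l4
  rw [hP, key, Fin.sum_univ_four]
  simp only [Matrix.cons_val, Fin.val_zero, Fin.val_one, Fin.val_two, pow_zero, pow_one, one_mul, ← hyq]
  generalize φ (y ^ 5) 1 / θ (y ^ 5) y = g at *
  generalize (qa y - q - q ^ 2 / qa y) = e at *
  have : ((3 : Fin 4) : ℕ) = 3 := rfl
  rw [this]
  field_simp
  ring

/-- Multiplied by the partition generating function, `2 + 5 * bil 0` has no exponents congruent
to `4` modulo `5`. -/
theorem zero_dissect : ∃ X : Fin 4 → ℂ → ℂ, ∀ q : ℂ, q ≠ 0 → ‖q‖ < 1 / 2 →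
    genP q * (2 + 5 * bil 0 q) = ∑ i : Fin 4, q ^ (i : ℕ) * X i (q ^ 5) := by
  refine ⟨![
    fun y => (φ (y ^ 5) 1 / θ (y ^ 5) y * (2 * qa y) - 5 * y * A (y ^ 5) 1 y) / eps (y ^ 5),
    fun y => φ (y ^ 5) 1 / θ (y ^ 5) y * 2 / eps (y ^ 5),
    fun y => φ (y ^ 5) 1 / θ (y ^ 5) y * (-1 / qa y) / eps (y ^ 5),
    fun y => φ (y ^ 5) 1 / θ (y ^ 5) y * (1 / qa y ^ 2) / eps (y ^ 5)], fun q hq hq1 => ?_⟩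
  obtain ⟨y, hyq⟩ : ∃ y, y = q ^ 5 := ⟨_, rfl⟩
  have hy1 := norm_fifth hq1 hyq
  have hy : y ≠ 0 := hyq ▸ pow_ne_zero 5 hq
  obtain ⟨hε, he, hP⟩ := genP_dissect hq hq1 y hyq hy1
  have l1 := logder_one hy hy1
  have l2 := logder_two hy hy1
  have ha := qa_ne hy hy1
  have key : 2 + 5 * bil 0 q = (qa y - q - q ^ 2 / qa y) *
      (φ (y ^ 5) 1 / θ (y ^ 5) y * (2 * qa y + 2 * q - q ^ 2 / qa y + q ^ 3 / qa y ^ 2) -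
        5 * y * A (y ^ 5) 1 y) := by
    rw [bil_zero hq (by linarith) hyq hy1]
    have l3 : 2 - 5 * (L (y ^ 5) y + L (y ^ 5) (y ^ 2)) =
        2 * (φ (y ^ 5) 1 / θ (y ^ 5) y * qa y ^ 2) -
          y * (φ (y ^ 5) 1 / θ (y ^ 5) y) / qa y ^ 3 := by
      rw [← l1, ← l2]; ring
    generalize φ (y ^ 5) 1 / θ (y ^ 5) y = g at *
    generalize qa y = a at *
    have l4 : 2 * (g * a ^ 2) - y * g / a ^ 3 - 5 * q ^ 2 * g = (a - q - q ^ 2 / a) *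
      (g * (2 * a + 2 * q - q ^ 2 / a + q ^ 3 / a ^ 2)) := by
      rw [hyq]; field_simp; ring
    linear_combination l3 + l4
  rw [hP, key, Fin.sum_univ_four]
  simp only [Matrix.cons_val, Fin.val_zero, Fin.val_one, Fin.val_two, pow_zero, pow_one, one_mul, ← hyq]
  generalize φ (y ^ 5) 1 / θ (y ^ 5) y = g at *
  generalize (qa y - q - q ^ 2 / qa y) = e at *
  have : ((3 : Fin 4) : ℕ) = 3 := rfl
  rw [this]
  field_simp
  ring

end

/-! ### Extraction of coefficients -/

section

theorem sum_root (j : ℕ) {ω : ℂ} (hω : IsPrimitiveRoot ω 5) :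
    ∑ k : Fin 5, (ω ^ (k : ℕ)) ^ j = if 5 ∣ j then 5 else 0 := by
  have h : ∀ k : Fin 5, (ω ^ (k : ℕ)) ^ j = (ω ^ j) ^ (k : ℕ) := fun k => by
    rw [← pow_mul, ← pow_mul, mul_comm]
  simp_rw [h]
  rw [Fin.sum_univ_eq_sum_range (fun k => (ω ^ j) ^ k)]
  split_ifs with hj
  · rw [(hω.pow_eq_one_iff_dvd j).2 hj]; simp
  · have hne : ω ^ j ≠ 1 := fun h => hj ((hω.pow_eq_one_iff_dvd j).1 h)
    have h5 : (ω ^ j) ^ 5 = 1 := by rw [← pow_mul, mul_comm, pow_mul, hω.pow_eq_one, one_pow]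
    rw [geom_sum_eq hne, h5, sub_self, zero_div]

/-- A power series whose sum has the form `∑ q ^ i X i (q ^ 5)` with `i < 4` has no terms with
exponent congruent to `4` modulo `5`. The filter over the fifth roots of unity isolates them. -/
theorem coeff_eq_zero {d : ℕ → ℂ} {D : ℂ → ℂ} (hD : ∀ q : ℂ, ‖q‖ < 1 / 2 →
      HasSum (fun n => d n * q ^ n) (D q))
    {X : Fin 4 → ℂ → ℂ} (hX : ∀ q : ℂ, q ≠ 0 → ‖q‖ < 1 / 2 →
      D q = ∑ i : Fin 4, q ^ (i : ℕ) * X i (q ^ 5)) (n : ℕ) : d (5 * n + 4) = 0 := by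
  obtain ⟨ω, hω⟩ : ∃ ω : ℂ, IsPrimitiveRoot ω 5 := ⟨_, Complex.isPrimitiveRoot_exp 5 (by norm_num)⟩
  have hω5 := hω.pow_eq_one
  have hωn : ‖ω‖ = 1 := hω.norm'_eq_one (by norm_num)
  have hsum : ∀ q : ℂ, q ≠ 0 → ‖q‖ < 1 / 2 →
      HasSum (fun n => (if 5 ∣ n + 1 then 5 * d n else 0) * q ^ n) 0 := by
    intro q hq hq1
    have hk : ∀ k : Fin 5, HasSum (fun n => ω ^ (k : ℕ) * (d n * (ω ^ (k : ℕ) * q) ^ n))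
        (ω ^ (k : ℕ) * ∑ i : Fin 4, (ω ^ (k : ℕ) * q) ^ (i : ℕ) * X i (q ^ 5)) := by
      intro k
      have hn : ‖ω ^ (k : ℕ) * q‖ < 1 / 2 := by rwa [norm_mul, norm_pow, hωn, one_pow, one_mul]
      have h := hD _ hn
      rw [hX _ (mul_ne_zero (pow_ne_zero _ (hω.ne_zero (by norm_num))) hq) hn, mul_pow _ q 5,
        pow_right_comm, hω5, one_pow, one_mul] at h
      exact h.mul_left _
    have hs := hasSum_sum fun k (_ : k ∈ Finset.univ) => hk k
    convert hs using 1
    · funext n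
      have e : ∀ k : Fin 5, ω ^ (k : ℕ) * (d n * (ω ^ (k : ℕ) * q) ^ n) =
          (ω ^ (k : ℕ)) ^ (n + 1) * (d n * q ^ n) := fun k => by rw [mul_pow]; ring
      simp_rw [e]
      rw [← Finset.sum_mul, sum_root _ hω]
      split_ifs <;> ring
    · have e : ∀ k : Fin 5, ω ^ (k : ℕ) * ∑ i : Fin 4, (ω ^ (k : ℕ) * q) ^ (i : ℕ) * X i (q ^ 5) =
          ∑ i : Fin 4, (ω ^ (k : ℕ)) ^ ((i : ℕ) + 1) * (q ^ (i : ℕ) * X i (q ^ 5)) := fun k => by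
        rw [Finset.mul_sum]
        refine Finset.sum_congr rfl fun i _ => ?_
        rw [mul_pow]; ring
      simp_rw [e]
      rw [Finset.sum_comm]
      symm
      refine Finset.sum_eq_zero fun i _ => ?_
      rw [← Finset.sum_mul, sum_root _ hω, if_neg (by omega), zero_mul]
  have hp : HasFPowerSeriesAt (0 : ℂ → ℂ)
      (FormalMultilinearSeries.ofScalars ℂ fun n => if 5 ∣ n + 1 then 5 * d n else 0) 0 := by
    rw [hasFPowerSeriesAt_iff]
    filter_upwards [Metric.ball_mem_nhds (0 : ℂ) (show (0 : ℝ) < 1 / 2 by norm_num)] with q hq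
    rw [mem_ball_zero_iff] at hq
    simp only [FormalMultilinearSeries.coeff_ofScalars, smul_eq_mul, Pi.zero_apply]
    by_cases h0 : q = 0
    · subst h0
      convert hasSum_zero using 1
      funext n
      rcases n with _ | n
      · simp
      · simp
    · simpa only [mul_comm] using hsum q h0 hq
  have h := congrArg (fun s => s.coeff (5 * n + 4)) hp.eq_zero
  have h0 : (0 : FormalMultilinearSeries ℂ ℂ ℂ).coeff (5 * n + 4) = 0 := rfl
  simpa [FormalMultilinearSeries.coeff_ofScalars, show 5 ∣ 5 * n + 4 + 1 by omega, h0] using h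

theorem first_vanishes (n : ℕ) : (partitionCount (5 * n + 4) : ℤ) -
    5 * (rankSum 2 (5 * n + 4) - rankSum 4 (5 * n + 4)) = 0 := by
  obtain ⟨X, hX⟩ := one_dissect
  have h := coeff_eq_zero
    (d := fun n => (((partitionCount n : ℤ) - 5 * (rankSum 2 n - rankSum 4 n) : ℤ) : ℂ))
    (D := fun q => genP q - 5 * (genV 2 q - genV 4 q)) (X := X) (fun q hq => ?_)
    (fun q hq0 hq => ?_) n
  · exact_mod_cast h
  · have hs := (genP_summable hq).hasSum.sub
      (((genV_summable hq 2).hasSum.sub (genV_summable hq 4).hasSum).mul_left 5)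
    refine (congrArg (HasSum · _) (funext fun n => ?_)).mpr hs
    push_cast; ring
  · have hb := bil_eq hq0 hq 1 (by norm_num)
    norm_num at hb
    rw [← hX q hq0 hq, genV_eq hq (by norm_num), genV_eq hq (by norm_num), hb]
    ring

theorem second_vanishes (n : ℕ) : 2 * (partitionCount (5 * n + 4) : ℤ) -
    5 * (rankSum 1 (5 * n + 4) - rankSum 5 (5 * n + 4)) = 0 := by
  obtain ⟨X, hX⟩ := zero_dissect
  have h := coeff_eq_zero
    (d := fun n => ((2 * (partitionCount n : ℤ) - 5 * (rankSum 1 n - rankSum 5 n) : ℤ) : ℂ))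
    (D := fun q => 2 * genP q - 5 * (genV 1 q - genV 5 q)) (X := X) (fun q hq => ?_)
    (fun q hq0 hq => ?_) n
  · exact_mod_cast h
  · have hs := ((genP_summable hq).hasSum.mul_left 2).sub
      (((genV_summable hq 1).hasSum.sub (genV_summable hq 5).hasSum).mul_left 5)
    refine (congrArg (HasSum · _) (funext fun n => ?_)).mpr hs
    push_cast; ring
  · have hb := bil_eq hq0 hq 0 (by norm_num)
    norm_num at hb
    rw [← hX q hq0 hq, genV_eq hq (by norm_num), genV_eq hq (by norm_num), hb]
    ring

end

end DysonMod5

/-- Dyson's rank conjecture modulo 5: the residue of the rank mod 5 divides the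
partitions of `5n+4` into five equally numerous classes, each of size `p(5n+4)/5`. -/
theorem dyson_rank_conjecture_mod_five (n : ℕ) :
    NRank 0 5 (5 * n + 4) = NRank 1 5 (5 * n + 4) ∧
    NRank 1 5 (5 * n + 4) = NRank 2 5 (5 * n + 4) ∧
    NRank 2 5 (5 * n + 4) = NRank 3 5 (5 * n + 4) ∧
    NRank 3 5 (5 * n + 4) = NRank 4 5 (5 * n + 4) ∧
    5 * NRank 0 5 (5 * n + 4) = partitionCount (5 * n + 4) := by
  exact DysonMod5.equidistribution_of (5 * n + 4) (DysonMod5.first_vanishes n)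
    (DysonMod5.second_vanishes n)
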